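/- arXiv:1910.01371 — 3 statements merged into one kernel-verified Lean document; each statement's English description precedes it below -/
import Mathlib

section
/- For every c > 0 there exists a constant C_c > 0 such that for all ν ≥ 0 and all x ≥ max{(1+c)ν, 2}, | √(π/2) · (x² − ν²)^{1/4} · J_ν(x) − sin(π x g(ν/x) + π/4) | ≤ C_c / x. -/
open Real MeasureTheory Set

/-- The Bessel function of the first kind of order `ν ≥ 0`, for `x > 0`, via the
integral representation. -/
noncomputable def besselJ (ν x : ℝ) : ℝ :=
  (1 / π) * (∫ θ in (0:ℝ)..π, Real.cos (x * Real.sin θ - ν * θ)) -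
    (Real.sin (ν * π) / π) * ∫ t in Set.Ioi (0:ℝ), Real.exp (-x * Real.sinh t - ν * t)

/-- The function `g(t) = (√(1-t²) - t arccos t)/π`. -/
noncomputable def gfun (t : ℝ) : ℝ := (Real.sqrt (1 - t ^ 2) - t * Real.arccos t) / π


open Filter Topology

/-- Abstract WKB comparison. -/
lemma wkb_bound (A B A' B' : ℝ → ℝ) (K a b x0 : ℝ) (hK : 0 ≤ K) (hx0 : 0 < x0)
    (hA : ∀ y, x0 ≤ y → HasDerivAt A (A' y) y) (hB : ∀ y, x0 ≤ y → HasDerivAt B (B' y) y)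
    (hA' : ∀ y, x0 ≤ y → |A' y| ≤ K / y ^ 2 * √(A y ^ 2 + B y ^ 2))
    (hB' : ∀ y, x0 ≤ y → |B' y| ≤ K / y ^ 2 * √(A y ^ 2 + B y ^ 2))
    (ha : Tendsto A atTop (𝓝 a)) (hb : Tendsto B atTop (𝓝 b)) :
    |A x0 - a| ≤ K * √((a ^ 2 + b ^ 2) * exp (4 * K / x0)) / x0 ∧
      |B x0 - b| ≤ K * √((a ^ 2 + b ^ 2) * exp (4 * K / x0)) / x0 := by
  have mono : ∀ (f f' : ℝ → ℝ) (l : ℝ), (∀ y, x0 ≤ y → HasDerivAt f (f' y) y) →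
      (∀ y, x0 ≤ y → 0 ≤ f' y) → Tendsto f atTop (𝓝 l) → ∀ y, x0 ≤ y → f y ≤ l := by
    intro f f' l h1 h2 h3 y hy
    have hm : MonotoneOn f (Ici x0) := by
      apply monotoneOn_of_hasDerivWithinAt_nonneg (f' := f') (convex_Ici x0)
      · intro z hz
        exact (h1 z hz).continuousAt.continuousWithinAt
      · intro z hz
        exact (h1 z (interior_subset hz)).hasDerivWithinAt
      · intro z hz
        exact h2 z (interior_subset hz)
    apply ge_of_tendsto h3
    filter_upwards [eventually_ge_atTop y] with z hz
    exact hm hy (hy.trans hz) hz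
  have hinv : ∀ k y : ℝ, x0 ≤ y → HasDerivAt (fun z : ℝ => k / z) (-k / y ^ 2) y := by
    intro k y hy
    have hy0 : y ≠ 0 := (hx0.trans_le hy).ne'
    have := (hasDerivAt_const y k).div (hasDerivAt_id y) hy0
    simp only [zero_mul, mul_one, zero_sub, id] at this
    exact this
  have hinvt : ∀ k : ℝ, Tendsto (fun z : ℝ => k / z) atTop (𝓝 0) := fun k =>
    tendsto_const_nhds.div_atTop tendsto_id
  -- energy
  have hE : ∀ y, x0 ≤ y → A y ^ 2 + B y ^ 2 ≤ (a ^ 2 + b ^ 2) * exp (4 * K / x0) := by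
    intro y hy
    have key := mono (fun z => (A z ^ 2 + B z ^ 2) * exp (-(4 * K) / z))
      (fun z => (2 * A z * A' z + 2 * B z * B' z) * exp (-(4 * K) / z) +
        (A z ^ 2 + B z ^ 2) * (exp (-(4 * K) / z) * (-(-(4 * K)) / z ^ 2))) (a ^ 2 + b ^ 2)
      (by
        intro z hz
        have h1 := ((hA z hz).pow 2).add ((hB z hz).pow 2)
        have h2 := (hinv (-(4 * K)) z hz).exp
        refine (h1.mul h2).congr_deriv ?_
        simp)
      (by
        intro z hz
        have hz0 : 0 < z := hx0.trans_le hz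
        set E := A z ^ 2 + B z ^ 2 with hEdef
        have hE0 : 0 ≤ E := by positivity
        have h1 : |A z| ≤ √E := by
          apply Real.abs_le_sqrt; nlinarith [sq_nonneg (B z)]
        have h2 : |B z| ≤ √E := by
          apply Real.abs_le_sqrt; nlinarith [sq_nonneg (A z)]
        have h3 : |A z * A' z| ≤ √E * (K / z ^ 2 * √E) := by
          rw [abs_mul]; gcongr; exact hA' z hz
        have h4 : |B z * B' z| ≤ √E * (K / z ^ 2 * √E) := by
          rw [abs_mul]; gcongr; exact hB' z hz
        have h5 : √E * (K / z ^ 2 * √E) = K / z ^ 2 * E := by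
          rw [mul_comm, mul_assoc, Real.mul_self_sqrt hE0]
        rw [h5] at h3 h4
        have h6 := (abs_le.1 h3).1
        have h7 := (abs_le.1 h4).1
        have : 0 ≤ (2 * A z * A' z + 2 * B z * B' z + E * (4 * K / z ^ 2)) := by
          have : E * (4 * K / z ^ 2) = 4 * (K / z ^ 2 * E) := by ring
          rw [this]; nlinarith
        have h8 := mul_nonneg this (exp_pos (-(4 * K) / z)).le
        refine h8.trans_eq ?_
        ring)
      (by
        have h1 := (ha.pow 2).add (hb.pow 2)
        have h2 := (hinvt (-(4 * K))).rexp
        simpa using h1.mul h2) y hy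
    have hy0 : 0 < y := hx0.trans_le hy
    calc A y ^ 2 + B y ^ 2 = (A y ^ 2 + B y ^ 2) * exp (-(4 * K) / y) * exp (4 * K / y) := by
          rw [mul_assoc, ← Real.exp_add, neg_div, neg_add_cancel, Real.exp_zero, mul_one]
      _ ≤ (a ^ 2 + b ^ 2) * exp (4 * K / x0) := by gcongr
  set M := √((a ^ 2 + b ^ 2) * exp (4 * K / x0)) with hM
  have fin : ∀ (f f' : ℝ → ℝ) (l : ℝ), (∀ y, x0 ≤ y → HasDerivAt f (f' y) y) →
      (∀ y, x0 ≤ y → |f' y| ≤ K / y ^ 2 * √(A y ^ 2 + B y ^ 2)) → Tendsto f atTop (𝓝 l) →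
      |f x0 - l| ≤ K * M / x0 := by
    intro f f' l h1 h2 h3
    have h4 : ∀ y, x0 ≤ y → |f' y| ≤ K * M / y ^ 2 := by
      intro y hy
      have hy0 : 0 < y := hx0.trans_le hy
      refine (h2 y hy).trans ?_
      rw [mul_div_right_comm]
      gcongr
      exact Real.sqrt_le_sqrt (hE y hy)
    have u1 := mono (fun z => f z + -(K * M) / z) (fun z => f' z + -(-(K * M)) / z ^ 2) (l + 0)
      (fun y hy => (h1 y hy).add (hinv _ y hy))
      (fun y hy => by have := (abs_le.1 (h4 y hy)).1; rw [neg_neg]; linarith)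
      (h3.add (hinvt _)) x0 le_rfl
    have u2 := mono (fun z => -f z + -(K * M) / z) (fun z => -f' z + -(-(K * M)) / z ^ 2) (-l + 0)
      (fun y hy => (h1 y hy).neg.add (hinv _ y hy))
      (fun y hy => by have := (abs_le.1 (h4 y hy)).2; rw [neg_neg]; linarith)
      (h3.neg.add (hinvt _)) x0 le_rfl
    simp only [neg_div] at u1 u2
    rw [abs_le]; constructor <;> linarith
  exact ⟨fin A A' a hA hA' ha, fin B B' b hB hB' hb⟩

lemma param_deriv (f f' : ℝ → ℝ → ℝ) (hf : ∀ x, Continuous (f x)) (hf' : ∀ x, Continuous (f' x))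
    (hd : ∀ x t, HasDerivAt (fun y => f y t) (f' x t) x) (hb : ∀ x t, |f' x t| ≤ 1) (x : ℝ) :
    HasDerivAt (fun y => ∫ t in (0:ℝ)..π, f y t) (∫ t in (0:ℝ)..π, f' x t) x := by
  refine (intervalIntegral.hasDerivAt_integral_of_dominated_loc_of_deriv_le (s := univ)
    (bound := fun _ => 1) univ_mem ?_ ((hf x).intervalIntegrable _ _) ?_ ?_ ?_ ?_).2
  · exact Eventually.of_forall fun y => (hf y).aestronglyMeasurable
  · exact (hf' x).aestronglyMeasurable
  · exact Eventually.of_forall fun t _ y _ => hb y t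
  · exact intervalIntegrable_const
  · exact Eventually.of_forall fun t _ y _ => hd y t

noncomputable def bF0 (ν x : ℝ) : ℝ := ∫ θ in (0:ℝ)..π, cos (x * sin θ - ν * θ)
noncomputable def bF1 (ν x : ℝ) : ℝ := ∫ θ in (0:ℝ)..π, -(sin θ * sin (x * sin θ - ν * θ))
noncomputable def bF2 (ν x : ℝ) : ℝ := ∫ θ in (0:ℝ)..π, -(sin θ ^ 2 * cos (x * sin θ - ν * θ))

lemma phase_deriv (ν t x : ℝ) : HasDerivAt (fun y => y * sin t - ν * t) (sin t) x := by
  simpa using ((hasDerivAt_id x).mul_const (sin t)).sub_const (ν * t)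

lemma bF0_deriv (ν x : ℝ) : HasDerivAt (bF0 ν) (bF1 ν x) x := by
  apply param_deriv (fun x θ => cos (x * sin θ - ν * θ))
    (fun x θ => -(sin θ * sin (x * sin θ - ν * θ)))
  · intro x; fun_prop
  · intro x; fun_prop
  · intro x t
    refine (phase_deriv ν t x).cos.congr_deriv ?_; ring
  · intro x t
    rw [abs_neg, abs_mul]
    exact mul_le_one₀ (abs_sin_le_one _) (abs_nonneg _) (abs_sin_le_one _)

lemma bF1_deriv (ν x : ℝ) : HasDerivAt (bF1 ν) (bF2 ν x) x := by
  apply param_deriv (fun x θ => -(sin θ * sin (x * sin θ - ν * θ)))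
    (fun x θ => -(sin θ ^ 2 * cos (x * sin θ - ν * θ)))
  · intro x; fun_prop
  · intro x; fun_prop
  · intro x t
    refine ((phase_deriv ν t x).sin.const_mul (sin t)).neg.congr_deriv ?_; ring
  · intro x t
    rw [abs_neg, abs_mul, abs_pow]
    exact mul_le_one₀ (pow_le_one₀ (abs_nonneg _) (abs_sin_le_one _)) (abs_nonneg _)
      (abs_cos_le_one _)

lemma bF_ode (ν x : ℝ) :
    x ^ 2 * bF2 ν x + x * bF1 ν x + (x ^ 2 - ν ^ 2) * bF0 ν x = (x - ν) * sin (ν * π) := by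
  have h : ∫ θ in (0:ℝ)..π, (x ^ 2 * (-(sin θ ^ 2 * cos (x * sin θ - ν * θ))) +
      x * (-(sin θ * sin (x * sin θ - ν * θ))) + (x ^ 2 - ν ^ 2) * cos (x * sin θ - ν * θ)) =
      (x * cos π + ν) * sin (x * sin π - ν * π) - (x * cos 0 + ν) * sin (x * sin 0 - ν * 0) := by
    apply intervalIntegral.integral_eq_sub_of_hasDerivAt
      (f := fun θ => (x * cos θ + ν) * sin (x * sin θ - ν * θ))
    · intro θ _
      have h1 : HasDerivAt (fun θ => x * sin θ - ν * θ) (x * cos θ - ν) θ := by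
        refine (((hasDerivAt_sin θ).const_mul x).sub
          ((hasDerivAt_id θ).const_mul ν)).congr_deriv ?_
        simp
      have h2 : HasDerivAt (fun θ => x * cos θ + ν) (x * (-sin θ)) θ :=
        ((hasDerivAt_cos θ).const_mul x).add_const ν
      refine (h2.mul h1.sin).congr_deriv ?_
      have := sin_sq_add_cos_sq θ
      linear_combination (x ^ 2 * cos (x * sin θ - ν * θ)) * this
    · apply Continuous.intervalIntegrable; fun_prop
  rw [intervalIntegral.integral_add, intervalIntegral.integral_add,
    intervalIntegral.integral_const_mul, intervalIntegral.integral_const_mul,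
    intervalIntegral.integral_const_mul] at h
  · simp only [bF0, bF1, bF2, h, cos_pi, sin_pi, sin_zero, mul_zero, zero_sub, sin_neg]
    simp; ring
  all_goals (apply Continuous.intervalIntegrable; fun_prop)

noncomputable def bG (ν : ℝ) (k : ℕ) (x : ℝ) : ℝ :=
  ∫ t in Ioi (0:ℝ), sinh t ^ k * exp (-x * sinh t - ν * t)

lemma bG_bound (ν x t : ℝ) (k : ℕ) (hν : 0 ≤ ν) (hx : 0 < x) (ht : 0 ≤ t) :
    |sinh t ^ k * exp (-x * sinh t - ν * t)| ≤ k.factorial * (2 / x) ^ k * exp (-(x / 2) * t) := by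
  have hs : t ≤ sinh t := self_le_sinh_iff.2 ht
  have hs0 : 0 ≤ sinh t := ht.trans hs
  rw [abs_of_nonneg (by positivity)]
  have h1 := Real.pow_div_factorial_le_exp (x / 2 * sinh t) (by positivity) k
  have hk : (0:ℝ) < k.factorial := by positivity
  have h2 : sinh t ^ k ≤ k.factorial * (2 / x) ^ k * exp (x / 2 * sinh t) := by
    rw [div_le_iff₀ hk, mul_pow] at h1
    have : sinh t ^ k = (2 / x) ^ k * ((x / 2) ^ k * sinh t ^ k) := by
      rw [← mul_assoc, ← mul_pow]
      have : 2 / x * (x / 2) = 1 := by field_simp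
      rw [this]; simp
    rw [this]
    calc _ ≤ (2 / x) ^ k * (exp (x / 2 * sinh t) * k.factorial) := by gcongr
      _ = _ := by ring
  calc sinh t ^ k * exp (-x * sinh t - ν * t)
      ≤ k.factorial * (2 / x) ^ k * exp (x / 2 * sinh t) * exp (-x * sinh t - ν * t) := by gcongr
    _ = k.factorial * (2 / x) ^ k * exp (x / 2 * sinh t + (-x * sinh t - ν * t)) := by
        rw [mul_assoc, ← Real.exp_add]
    _ ≤ _ := by
        gcongr
        have : x / 2 * t ≤ x / 2 * sinh t := by gcongr
        nlinarith [mul_nonneg hν ht]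

lemma bG_meas (ν x : ℝ) (k : ℕ) : Continuous fun t => sinh t ^ k * exp (-x * sinh t - ν * t) := by
  fun_prop

lemma bound_int (x C : ℝ) (hx : 0 < x) :
    IntegrableOn (fun t : ℝ => C * exp (-(x / 2) * t)) (Ioi 0) :=
  (exp_neg_integrableOn_Ioi 0 (by positivity)).const_mul C

lemma bG_int (ν x : ℝ) (k : ℕ) (hν : 0 ≤ ν) (hx : 0 < x) :
    IntegrableOn (fun t => sinh t ^ k * exp (-x * sinh t - ν * t)) (Ioi 0) := by
  refine Integrable.mono' (bound_int x (k.factorial * (2 / x) ^ k) hx)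
    (bG_meas ν x k).aestronglyMeasurable ?_
  filter_upwards [ae_restrict_mem measurableSet_Ioi] with t ht
  exact bG_bound ν x t k hν hx (le_of_lt ht)

lemma bG_le (ν x : ℝ) (k : ℕ) (hν : 0 ≤ ν) (hx : 0 < x) :
    |bG ν k x| ≤ k.factorial * (2 / x) ^ k * (2 / x) := by
  have h := norm_integral_le_of_norm_le (bound_int x (k.factorial * (2 / x) ^ k) hx)
    (f := fun t => sinh t ^ k * exp (-x * sinh t - ν * t)) (by
      filter_upwards [ae_restrict_mem measurableSet_Ioi] with t ht
      exact bG_bound ν x t k hν hx (le_of_lt ht))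
  refine h.trans_eq ?_
  rw [integral_const_mul, integral_exp_mul_Ioi (by linarith)]
  simp

lemma bG_deriv (ν x : ℝ) (k : ℕ) (hν : 0 ≤ ν) (hx : 0 < x) :
    HasDerivAt (bG ν k) (-bG ν (k + 1) x) x := by
  have h := (hasDerivAt_integral_of_dominated_loc_of_deriv_le (μ := volume.restrict (Ioi (0:ℝ)))
    (s := Ioi (x / 2)) (F := fun x t => sinh t ^ k * exp (-x * sinh t - ν * t))
    (F' := fun x t => -(sinh t ^ (k + 1) * exp (-x * sinh t - ν * t))) (x₀ := x)
    (bound := fun t => (k + 1).factorial * (2 / (x / 2)) ^ (k + 1) * exp (-(x / 2 / 2) * t))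
    (Ioi_mem_nhds (by linarith))
    (Eventually.of_forall fun y => (bG_meas ν y k).aestronglyMeasurable)
    (bG_int ν x k hν hx) (bG_meas ν x (k + 1)).neg.aestronglyMeasurable ?_
    (bound_int (x / 2) _ (by linarith)) ?_).2
  · rw [integral_neg] at h
    exact h
  · filter_upwards [ae_restrict_mem measurableSet_Ioi] with t ht y hy
    have hy' : x / 2 < y := hy
    have ht' : 0 ≤ t := le_of_lt ht
    have hs0 : 0 ≤ sinh t := sinh_nonneg_iff.2 ht'
    have := bG_bound ν (x / 2) t (k + 1) hν (by linarith) ht'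
    rw [norm_neg, Real.norm_eq_abs]
    refine le_trans ?_ this
    rw [abs_of_nonneg (by positivity), abs_of_nonneg (by positivity)]
    gcongr
  · refine Eventually.of_forall fun t y _ => ?_
    have h1 : HasDerivAt (fun y => -y * sinh t - ν * t) (-sinh t) y := by
      simpa using ((hasDerivAt_id y).neg.mul_const (sinh t)).sub_const (ν * t)
    refine (h1.exp.const_mul (sinh t ^ k)).congr_deriv ?_
    ring

lemma bG_ode (ν x : ℝ) (hν : 0 ≤ ν) (hx : 0 < x) :
    x ^ 2 * bG ν 2 x - x * bG ν 1 x + (x ^ 2 - ν ^ 2) * bG ν 0 x = x - ν := by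
  have i0 := bG_int ν x 0 hν hx
  have i1 := bG_int ν x 1 hν hx
  have i2 := bG_int ν x 2 hν hx
  have h : ∫ t in Ioi (0:ℝ), (x ^ 2 * (sinh t ^ 2 * exp (-x * sinh t - ν * t)) -
      x * (sinh t ^ 1 * exp (-x * sinh t - ν * t)) +
      (x ^ 2 - ν ^ 2) * (sinh t ^ 0 * exp (-x * sinh t - ν * t))) =
      0 - (-((x * cosh 0 - ν) * exp (-x * sinh 0 - ν * 0))) := by
    apply integral_Ioi_of_hasDerivAt_of_tendsto'
      (f := fun t => -((x * cosh t - ν) * exp (-x * sinh t - ν * t)))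
    · intro t _
      have h1 : HasDerivAt (fun t => -x * sinh t - ν * t) (-x * cosh t - ν) t := by
        refine (((Real.hasDerivAt_sinh t).const_mul (-x)).sub
          ((hasDerivAt_id t).const_mul ν)).congr_deriv ?_
        simp
      have h2 : HasDerivAt (fun t => x * cosh t - ν) (x * sinh t) t :=
        ((Real.hasDerivAt_cosh t).const_mul x).sub_const ν
      refine (h2.mul h1.exp).neg.congr_deriv ?_
      have := Real.cosh_sq t
      linear_combination (x ^ 2 * exp (-x * sinh t - ν * t)) * this
    · exact ((i2.const_mul _).sub (i1.const_mul _)).add (i0.const_mul _)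
    · have hb : Tendsto (fun t : ℝ => (x * (1 + 1 * (2 / x)) + ν) * exp (-(x / 2) * t)) atTop
          (𝓝 0) := by
        have : Tendsto (fun t : ℝ => exp (-(x / 2) * t)) atTop (𝓝 0) := by
          apply Real.tendsto_exp_atBot.comp
          exact tendsto_id.const_mul_atTop_of_neg (by linarith)
        simpa using this.const_mul (x * (1 + 1 * (2 / x)) + ν)
      apply squeeze_zero_norm' _ hb
      filter_upwards [eventually_ge_atTop 0] with t ht
      have b0 := bG_bound ν x t 0 hν hx ht
      have b1 := bG_bound ν x t 1 hν hx ht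
      have hs0 : 0 ≤ sinh t := sinh_nonneg_iff.2 ht
      rw [abs_of_nonneg (by positivity)] at b0 b1
      simp only [Nat.factorial, pow_zero, pow_one, Nat.cast_one, one_mul, mul_one] at b0 b1
      have hc : cosh t ≤ 1 + sinh t := by
        have := Real.cosh_sub_sinh t
        have : exp (-t) ≤ 1 := by simpa using ht
        linarith
      have hc0 := Real.cosh_pos t
      rw [norm_neg, norm_mul, Real.norm_eq_abs, Real.norm_eq_abs, Real.abs_exp]
      have h3 : |x * cosh t - ν| ≤ x * (1 + sinh t) + ν := by
        have : x * cosh t ≤ x * (1 + sinh t) := by gcongr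
        have : 0 ≤ x * cosh t := by positivity
        rw [abs_le]; constructor <;> linarith
      calc _ ≤ (x * (1 + sinh t) + ν) * exp (-x * sinh t - ν * t) := by gcongr
        _ = (x + ν) * exp (-x * sinh t - ν * t) + x * (sinh t * exp (-x * sinh t - ν * t)) := by
          ring
        _ ≤ (x + ν) * exp (-(x / 2) * t) + x * (2 / x * exp (-(x / 2) * t)) := by
          have := mul_le_mul_of_nonneg_left b0 (by positivity : 0 ≤ x + ν)
          have := mul_le_mul_of_nonneg_left b1 hx.le
          linarith
        _ = _ := by ring
  rw [integral_add, integral_sub, integral_const_mul, integral_const_mul,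
    integral_const_mul] at h
  · simp only [bG, h]; simp
  · exact i2.const_mul _
  · exact i1.const_mul _
  · exact (i2.const_mul _).sub (i1.const_mul _)
  · exact i0.const_mul _

noncomputable def bJ1 (ν x : ℝ) : ℝ := (1 / π) * bF1 ν x + (sin (ν * π) / π) * bG ν 1 x
noncomputable def bJ2 (ν x : ℝ) : ℝ := (1 / π) * bF2 ν x - (sin (ν * π) / π) * bG ν 2 x

lemma besselJ_eq (ν x : ℝ) : besselJ ν x = (1 / π) * bF0 ν x - (sin (ν * π) / π) * bG ν 0 x := by
  simp [besselJ, bF0, bG]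

lemma bJ_deriv (ν x : ℝ) (hν : 0 ≤ ν) (hx : 0 < x) : HasDerivAt (besselJ ν) (bJ1 ν x) x := by
  have : besselJ ν = fun x => (1 / π) * bF0 ν x - (sin (ν * π) / π) * bG ν 0 x := by
    funext x; exact besselJ_eq ν x
  rw [this]
  refine (((bF0_deriv ν x).const_mul (1 / π)).sub
    ((bG_deriv ν x 0 hν hx).const_mul (sin (ν * π) / π))).congr_deriv ?_
  simp only [bJ1]; ring

lemma bJ1_deriv (ν x : ℝ) (hν : 0 ≤ ν) (hx : 0 < x) : HasDerivAt (bJ1 ν) (bJ2 ν x) x := by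
  refine (((bF1_deriv ν x).const_mul (1 / π)).add
    ((bG_deriv ν x 1 hν hx).const_mul (sin (ν * π) / π))).congr_deriv ?_
  simp only [bJ2]; ring

lemma bJ_ode (ν x : ℝ) (hν : 0 ≤ ν) (hx : 0 < x) :
    x ^ 2 * bJ2 ν x + x * bJ1 ν x + (x ^ 2 - ν ^ 2) * besselJ ν x = 0 := by
  rw [besselJ_eq, bJ1, bJ2]
  linear_combination (1 / π) * bF_ode ν x - (sin (ν * π) / π) * bG_ode ν x hν hx

open Complex in
lemma gauss_norm_le (b : ℂ) (hb : 0 ≤ b.re) (w : ℝ) : ‖cexp (-b * (w : ℂ) ^ 2)‖ ≤ 1 := by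
  rw [Complex.norm_exp]
  have : (-b * (w : ℂ) ^ 2).re = -(b.re * w ^ 2) := by
    rw [← Complex.ofReal_pow, Complex.re_mul_ofReal]; simp
  rw [this]
  simp only [Real.exp_le_one_iff]
  have := mul_nonneg hb (sq_nonneg w)
  linarith

open Complex in
lemma fresnel_tail (b : ℂ) (hb : 0 ≤ b.re) (hb0 : b ≠ 0) (R T : ℝ) (hR : 0 < R) (hT : R ≤ T) :
    ‖∫ w in R..T, cexp (-b * (w : ℂ) ^ 2)‖ ≤ 1 / (‖b‖ * R) := by
  have hT0 : 0 < T := hR.trans_le hT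
  have hpos : ∀ w ∈ uIcc R T, 0 < w := by
    intro w hw
    rw [uIcc_of_le hT] at hw
    exact hR.trans_le hw.1
  have cont2 : ContinuousOn (fun w : ℝ => cexp (-b * (w : ℂ) ^ 2) / (2 * b * (w : ℂ) ^ 2))
      (uIcc R T) := by
    apply ContinuousOn.div
    · fun_prop
    · fun_prop
    · intro w hw
      have := (hpos w hw).ne'
      have : (w : ℂ) ≠ 0 := by exact_mod_cast this
      simp [hb0, this]
  have ii1 : IntervalIntegrable (fun w : ℝ => cexp (-b * (w : ℂ) ^ 2)) volume R T := by
    apply Continuous.intervalIntegrable; fun_prop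
  have ii2 := cont2.intervalIntegrable (μ := volume)
  have h : ∫ w in R..T, (cexp (-b * (w : ℂ) ^ 2) + cexp (-b * (w : ℂ) ^ 2) / (2 * b * (w : ℂ) ^ 2))
      = cexp (-b * (T : ℂ) ^ 2) / (-2 * b * T) - cexp (-b * (R : ℂ) ^ 2) / (-2 * b * R) := by
    apply intervalIntegral.integral_eq_sub_of_hasDerivAt
      (f := fun w : ℝ => cexp (-b * (w : ℂ) ^ 2) / (-2 * b * w))
    · intro w hw
      have hw0 : (w : ℂ) ≠ 0 := by exact_mod_cast (hpos w hw).ne'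
      have h1 : HasDerivAt (fun w : ℝ => (w : ℂ)) 1 w := Complex.ofRealCLM.hasDerivAt
      have h2 := (((h1.pow 2).const_mul (-b)).cexp).div (h1.const_mul (-2 * b))
        (by simp [hb0, hw0])
      refine h2.congr_deriv ?_
      simp only [Pi.pow_apply]
      field_simp
      push_cast
      ring
    · exact ii1.add ii2
  rw [intervalIntegral.integral_add ii1 ii2] at h
  have hbn : 0 < ‖b‖ := norm_pos_iff.2 hb0
  have e1 : ∀ S : ℝ, 0 < S → ‖cexp (-b * (S : ℂ) ^ 2) / (-2 * b * S)‖ ≤ 1 / (2 * ‖b‖ * S) := by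
    intro S hS
    rw [norm_div]
    have : ‖-2 * b * (S : ℂ)‖ = 2 * ‖b‖ * S := by
      simp [abs_of_pos hS]
    rw [this]
    gcongr
    exact gauss_norm_le b hb S
  have e2 : ‖∫ w in R..T, cexp (-b * (w : ℂ) ^ 2) / (2 * b * (w : ℂ) ^ 2)‖ ≤
      ∫ w in R..T, (1 / (2 * ‖b‖)) * (1 / w ^ 2) := by
    apply intervalIntegral.norm_integral_le_of_norm_le hT
    · refine Eventually.of_forall fun w hw => ?_
      have hw0 : 0 < w := hR.trans hw.1
      rw [norm_div]
      have : ‖2 * b * (w : ℂ) ^ 2‖ = 2 * ‖b‖ * w ^ 2 := by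
        simp
      rw [this, div_mul_div_comm, one_mul]
      gcongr
      exact gauss_norm_le b hb w
    · apply ContinuousOn.intervalIntegrable
      apply ContinuousOn.mul continuousOn_const
      apply ContinuousOn.div continuousOn_const (by fun_prop)
      intro w hw
      have := hpos w hw
      positivity
  have e3 : ∫ w in R..T, (1 / w ^ 2 : ℝ) = -(1 / T) - -(1 / R) := by
    apply intervalIntegral.integral_eq_sub_of_hasDerivAt (f := fun w : ℝ => -(1 / w))
    · intro w hw
      have := (hpos w hw).ne'
      simp only [one_div]
      exact (hasDerivAt_inv this).neg.congr_deriv (by simp)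
    · apply ContinuousOn.intervalIntegrable
      apply ContinuousOn.div continuousOn_const (by fun_prop)
      intro w hw
      have := hpos w hw
      positivity
  rw [intervalIntegral.integral_const_mul, e3] at e2
  have e4 : ∫ w in R..T, cexp (-b * (w : ℂ) ^ 2) =
      cexp (-b * (T : ℂ) ^ 2) / (-2 * b * T) - cexp (-b * (R : ℂ) ^ 2) / (-2 * b * R) -
      ∫ w in R..T, cexp (-b * (w : ℂ) ^ 2) / (2 * b * (w : ℂ) ^ 2) := by
    rw [← h]; ring
  rw [e4]
  refine (norm_sub_le _ _).trans ?_
  have e5 := (norm_sub_le (cexp (-b * (T : ℂ) ^ 2) / (-2 * b * T))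
    (cexp (-b * (R : ℂ) ^ 2) / (-2 * b * R))).trans (add_le_add (e1 T hT0) (e1 R hR))
  refine (add_le_add e5 e2).trans_eq ?_
  field_simp
  ring

open Complex in
lemma fresnel_re_pos (b : ℂ) (hb : 0 < b.re) (R : ℝ) (hR : 0 < R) :
    ‖(∫ w in (0:ℝ)..R, cexp (-b * (w : ℂ) ^ 2)) - (π / b) ^ (1 / 2 : ℂ) / 2‖ ≤ 1 / (‖b‖ * R) := by
  have hb0 : b ≠ 0 := by rintro rfl; simp at hb
  rw [← integral_gaussian_complex_Ioi hb]
  have ht := intervalIntegral_tendsto_integral_Ioi (f := fun w : ℝ => cexp (-b * (w : ℂ) ^ 2)) 0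
    (integrable_cexp_neg_mul_sq hb).integrableOn tendsto_id
  have ht2 := (ht.const_sub (∫ w in (0:ℝ)..R, cexp (-b * (w : ℂ) ^ 2))).norm
  apply le_of_tendsto ht2
  filter_upwards [eventually_ge_atTop R] with T hT
  have ii : ∀ a c, IntervalIntegrable (fun w : ℝ => cexp (-b * (w : ℂ) ^ 2)) volume a c := by
    intro a c; apply Continuous.intervalIntegrable; fun_prop
  have := intervalIntegral.integral_add_adjacent_intervals (ii 0 R) (ii R T)
  rw [norm_sub_rev, id, ← this, add_sub_cancel_left]
  exact fresnel_tail b hb.le hb0 R T hR hT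

open Complex in
lemma fresnel_bound (R : ℝ) (hR : 0 < R) :
    ‖(∫ w in (0:ℝ)..R, cexp (-I * (w : ℂ) ^ 2)) - (π / I) ^ (1 / 2 : ℂ) / 2‖ ≤ 1 / R := by
  have hbt : Tendsto (fun ε : ℝ => (ε : ℂ) + I) (𝓝[>] 0) (𝓝 I) := by
    have : Continuous fun ε : ℝ => (ε : ℂ) + I := by fun_prop
    have := (this.tendsto 0).mono_left (nhdsWithin_le_nhds (s := Ioi 0))
    simpa using this
  have h1 : Tendsto (fun ε : ℝ => ∫ w in (0:ℝ)..R, cexp (-((ε : ℂ) + I) * (w : ℂ) ^ 2)) (𝓝[>] 0)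
      (𝓝 (∫ w in (0:ℝ)..R, cexp (-I * (w : ℂ) ^ 2))) := by
    have : Continuous (fun ε : ℝ => ∫ w in (0:ℝ)..R, cexp (-((ε : ℂ) + I) * (w : ℂ) ^ 2)) := by
      apply intervalIntegral.continuous_parametric_intervalIntegral_of_continuous'
      fun_prop
    have := (this.tendsto 0).mono_left (nhdsWithin_le_nhds (s := Ioi 0))
    simpa using this
  have h2 : Tendsto (fun ε : ℝ => (π / ((ε : ℂ) + I)) ^ (1 / 2 : ℂ) / 2) (𝓝[>] 0)
      (𝓝 ((π / I) ^ (1 / 2 : ℂ) / 2)) := by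
    apply Tendsto.div_const
    have h3 : Tendsto (fun ε : ℝ => (π / ((ε : ℂ) + I) : ℂ)) (𝓝[>] 0) (𝓝 (π / I)) :=
      tendsto_const_nhds.div hbt I_ne_zero
    have h4 : ContinuousAt (fun z : ℂ => z ^ (1 / 2 : ℂ)) (π / I) := by
      apply continuousAt_cpow_const
      right
      simp [pi_ne_zero]
    exact h4.tendsto.comp h3
  have h5 : Tendsto (fun ε : ℝ => 1 / (‖(ε : ℂ) + I‖ * R)) (𝓝[>] 0) (𝓝 (1 / R)) := by
    have : Tendsto (fun ε : ℝ => 1 / (‖(ε : ℂ) + I‖ * R)) (𝓝[>] 0) (𝓝 (1 / (‖I‖ * R))) :=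
      tendsto_const_nhds.div (hbt.norm.mul_const R) (by simp [hR.ne'])
    simpa using this
  apply le_of_tendsto_of_tendsto (h1.sub h2).norm h5
  filter_upwards [self_mem_nhdsWithin] with ε hε
  exact fresnel_re_pos _ (by simpa using hε) R hR

open Complex in
lemma fresnel_const : ((π : ℂ) / I) ^ (1 / 2 : ℂ) = √π * cexp (-I * (π / 4)) := by
  have h1 : ((π : ℂ) / I) = (π : ℂ) * (-I) := by simp [div_eq_mul_inv]
  have hpi : (π : ℂ) ≠ 0 := by exact_mod_cast pi_ne_zero
  have h2 : ((√π : ℝ) : ℂ) = cexp ((Real.log π : ℝ) * (1 / 2)) := by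
    rw [Real.sqrt_eq_rpow, Real.rpow_def_of_pos pi_pos]
    push_cast
    rfl
  rw [h1, Complex.cpow_def_of_ne_zero (by simp [hpi]), Complex.log_ofReal_mul pi_pos (by simp),
    Complex.log_neg_I, h2, ← Complex.exp_add]
  congr 1
  ring

open Complex in
/-- Non-stationary remainder. -/
lemma sp_rem (r r' r'' : ℝ → ℝ) (C : ℝ) (h0 : r 0 = 0) (h0' : r' 0 = 0)
    (hr : ∀ t, HasDerivAt r (r' t) t) (hr' : ∀ t, HasDerivAt r' (r'' t) t)
    (hC : ∀ t, |r'' t| ≤ C) (x : ℝ) (hx : 1 ≤ x) :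
    ‖∫ t in (0:ℝ)..(π / 2), cexp (I * (x * Real.cos t)) * (r t : ℂ)‖ ≤ 20 * C / x := by
  have hC0 : 0 ≤ C := (abs_nonneg _).trans (hC 0)
  have b1 : ∀ t, 0 ≤ t → |r' t| ≤ C * t := by
    intro t ht
    have := (convex_univ (𝕜 := ℝ) (E := ℝ)).norm_image_sub_le_of_norm_hasDerivWithin_le (f := r')
      (fun t _ => (hr' t).hasDerivWithinAt) (fun t _ => hC t) (mem_univ 0) (mem_univ t)
    simpa [h0', abs_of_nonneg ht] using this
  have b0 : ∀ t, 0 ≤ t → |r t| ≤ C * t * t := by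
    intro t ht
    have := (convex_Icc (𝕜 := ℝ) 0 t).norm_image_sub_le_of_norm_hasDerivWithin_le (f := r)
      (C := C * t)
      (fun s _ => (hr s).hasDerivWithinAt) (fun s hs => (b1 s hs.1).trans (by gcongr; exact hs.2))
      (left_mem_Icc.2 ht) (right_mem_Icc.2 ht)
    simpa [h0, abs_of_nonneg ht] using this
  have hx0 : 0 < x := by linarith
  have hpi := Real.pi_lt_d2
  have hpi3 := Real.pi_gt_three
  set ε := 1 / x with hε
  have hε0 : 0 < ε := by positivity
  have hε1 : ε ≤ π / 2 := by
    have : ε ≤ 1 := by rw [hε, div_le_one hx0]; exact hx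
    linarith
  have rc : Continuous r := continuous_iff_continuousAt.2 fun t => (hr t).continuousAt
  have rc' : Continuous r' := continuous_iff_continuousAt.2 fun t => (hr' t).continuousAt
  have ii : ∀ a c, IntervalIntegrable
      (fun t : ℝ => cexp (I * (x * Real.cos t)) * (r t : ℂ)) volume a c := by
    intro a c; apply Continuous.intervalIntegrable; fun_prop
  have en : ∀ t : ℝ, ‖cexp (I * (x * Real.cos t))‖ = 1 := by
    intro t
    rw [mul_comm, ← ofReal_mul, Complex.norm_exp_ofReal_mul_I]
  rw [← intervalIntegral.integral_add_adjacent_intervals (ii 0 ε) (ii ε (π / 2))]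
  -- first piece
  have p1 : ‖∫ t in (0:ℝ)..ε, cexp (I * (x * Real.cos t)) * (r t : ℂ)‖ ≤ 3 * C / x := by
    have : ‖∫ t in (0:ℝ)..ε, cexp (I * (x * Real.cos t)) * (r t : ℂ)‖ ≤ 3 * C * |ε - 0| := by
      apply intervalIntegral.norm_integral_le_of_norm_le_const
      intro t ht
      rw [uIoc_of_le hε0.le] at ht
      rw [norm_mul, en, one_mul, Complex.norm_real]
      refine (b0 t ht.1.le).trans ?_
      have h2 : t ≤ π / 2 := ht.2.trans hε1
      have : t * t ≤ 3 := by nlinarith [ht.1]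
      nlinarith
    refine this.trans_eq ?_
    rw [sub_zero, abs_of_pos hε0, hε]; ring
  -- sine lower bound
  have spos : ∀ t ∈ uIcc ε (π / 2), 0 < Real.sin t ∧ t ≤ π / 2 * Real.sin t ∧ 0 < t ∧ t ≤ π / 2 := by
    intro t ht
    rw [uIcc_of_le hε1] at ht
    have ht0 : 0 < t := hε0.trans_le ht.1
    have := Real.mul_le_sin ht0.le ht.2
    refine ⟨Real.sin_pos_of_pos_of_lt_pi ht0 (by linarith [ht.2]), ?_, ht0, ht.2⟩
    calc t = π / 2 * (2 / π * t) := by field_simp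
      _ ≤ _ := by gcongr
  set k : ℝ → ℝ := fun t => r t / Real.sin t with hk
  set k' : ℝ → ℝ := fun t => (r' t * Real.sin t - r t * Real.cos t) / Real.sin t ^ 2 with hk'
  have kd : ∀ t ∈ uIcc ε (π / 2), HasDerivAt k (k' t) t := fun t ht =>
    (hr t).div (Real.hasDerivAt_sin t) (spos t ht).1.ne'
  have kb : ∀ t ∈ uIcc ε (π / 2), |k t| ≤ 3 * C := by
    intro t ht
    obtain ⟨s0, s1, t0, t1⟩ := spos t ht
    rw [hk]; dsimp only
    rw [abs_div, abs_of_pos s0, div_le_iff₀ s0]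
    refine (b0 t t0.le).trans ?_
    have : t * t ≤ 3 * Real.sin t := by nlinarith
    nlinarith
  have kb' : ∀ t ∈ uIcc ε (π / 2), |k' t| ≤ 5 * C := by
    intro t ht
    obtain ⟨s0, s1, t0, t1⟩ := spos t ht
    rw [hk']; dsimp only
    rw [abs_div, abs_of_pos (by positivity : 0 < Real.sin t ^ 2), div_le_iff₀ (by positivity)]
    have a1 : |r' t * Real.sin t| ≤ C * t * Real.sin t := by
      rw [abs_mul, abs_of_pos s0]; gcongr; exact b1 t t0.le
    have a2 : |r t * Real.cos t| ≤ C * t * t := by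
      rw [abs_mul]
      calc _ ≤ C * t * t * 1 := by
            gcongr
            · exact b0 t t0.le
            · exact Real.abs_cos_le_one t
        _ = _ := by ring
    refine (abs_sub _ _).trans ((add_le_add a1 a2).trans ?_)
    have a3 : t * Real.sin t + t * t ≤ 5 * Real.sin t ^ 2 := by
      have : t ≤ 1.58 * Real.sin t := by nlinarith
      nlinarith
    nlinarith
  have kc' : ContinuousOn k' (uIcc ε (π / 2)) := by
    apply ContinuousOn.div (by fun_prop) (by fun_prop)
    intro t ht
    have := (spos t ht).1
    positivity
  have hxC : (x : ℂ) ≠ 0 := by exact_mod_cast hx0.ne'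
  have key := intervalIntegral.integral_mul_deriv_eq_deriv_mul (a := ε) (b := π / 2)
    (u := fun t => (k t : ℂ)) (u' := fun t => (k' t : ℂ))
    (v := fun t : ℝ => cexp (I * (x * Real.cos t)) * (I / x))
    (v' := fun t : ℝ => cexp (I * (x * Real.cos t)) * (Real.sin t))
    (fun t ht => (kd t ht).ofReal_comp)
    (fun t _ => by
      have h1 : HasDerivAt (fun t : ℝ => ((Real.cos t : ℝ) : ℂ)) ((-Real.sin t : ℝ) : ℂ) t :=
        (Real.hasDerivAt_cos t).ofReal_comp
      refine (((h1.const_mul (x : ℂ)).const_mul I).cexp.mul_const (I / x)).congr_deriv ?_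
      push_cast
      field_simp
      rw [I_sq]; ring)
    (by
      apply ContinuousOn.intervalIntegrable
      exact Complex.continuous_ofReal.comp_continuousOn kc')
    (by apply Continuous.intervalIntegrable; fun_prop)
  have eq1 : ∫ t in ε..(π / 2), cexp (I * (x * Real.cos t)) * (r t : ℂ) =
      ∫ t in ε..(π / 2), (k t : ℂ) * (cexp (I * (x * Real.cos t)) * (Real.sin t)) := by
    apply intervalIntegral.integral_congr
    intro t ht
    have := (spos t ht).1.ne'
    have hrk : r t = k t * Real.sin t := by rw [hk]; field_simp
    simp only [hrk]
    push_cast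
    ring
  have vn : ∀ t : ℝ, ‖cexp (I * (x * Real.cos t)) * (I / x)‖ = 1 / x := by
    intro t
    rw [norm_mul, en, norm_div]; simp [abs_of_pos hx0]
  have q1 : ∀ t ∈ uIcc ε (π / 2), ‖(k t : ℂ) * (cexp (I * (x * Real.cos t)) * (I / x))‖ ≤
      3 * C * (1 / x) := by
    intro t ht
    rw [norm_mul, vn, Complex.norm_real]
    gcongr
    exact kb t ht
  have q2 : ‖∫ t in ε..(π / 2), (k' t : ℂ) * (cexp (I * (x * Real.cos t)) * (I / x))‖ ≤
      5 * C * (1 / x) * |π / 2 - ε| := by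
    apply intervalIntegral.norm_integral_le_of_norm_le_const
    intro t ht
    rw [norm_mul, vn, Complex.norm_real]
    gcongr
    exact kb' t (uIoc_subset_uIcc ht)
  have q3 : |π / 2 - ε| ≤ 2 := by
    rw [abs_le]; constructor <;> linarith
  have p2 : ‖∫ t in ε..(π / 2), cexp (I * (x * Real.cos t)) * (r t : ℂ)‖ ≤ 16 * C / x := by
    rw [eq1, key]
    refine (norm_sub_le _ _).trans ?_
    have := (norm_sub_le _ _).trans
      (add_le_add (q1 _ right_mem_uIcc) (q1 _ left_mem_uIcc))
    refine (add_le_add this q2).trans ?_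
    calc _ ≤ 3 * C * (1 / x) + 3 * C * (1 / x) + 5 * C * (1 / x) * 2 := by gcongr
      _ = _ := by ring
  refine (norm_add_le _ _).trans ((add_le_add p1 p2).trans ?_)
  rw [← add_div]
  gcongr
  linarith

open Complex in
lemma sp_main (x : ℝ) (hx : 0 < x) :
    (√x : ℂ) * ∫ t in (0:ℝ)..(π / 2), cexp (I * (x * Real.cos t)) * (Real.cos (t / 2) : ℂ) =
      √2 * cexp (I * x) * ∫ w in (0:ℝ)..√x, cexp (-I * (w : ℂ) ^ 2) := by
  have h := intervalIntegral.integral_deriv_smul_comp (a := 0) (b := π / 2)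
    (f := fun t => √x * √2 * Real.sin (t / 2)) (f' := fun t => √x * √2 / 2 * Real.cos (t / 2))
    (g := fun w : ℝ => cexp (-I * (w : ℂ) ^ 2))
    (fun t _ => by
      have h1 : HasDerivAt (fun t : ℝ => t / 2) (1 / 2) t := (hasDerivAt_id t).div_const 2
      refine (h1.sin.const_mul (√x * √2)).congr_deriv ?_
      ring)
    (by fun_prop) (by fun_prop)
  have e1 : √x * √2 * Real.sin (0 / 2) = 0 := by simp
  have e2 : √x * √2 * Real.sin (π / 2 / 2) = √x := by
    have : π / 2 / 2 = π / 4 := by ring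
    rw [this, Real.sin_pi_div_four]
    have : √2 * √2 = 2 := Real.mul_self_sqrt (by norm_num)
    linear_combination √x / 2 * this
  rw [e1, e2] at h
  rw [← h, ← intervalIntegral.integral_const_mul, ← intervalIntegral.integral_const_mul]
  apply intervalIntegral.integral_congr
  intro t _
  simp only [Function.comp, Complex.real_smul]
  have e3 : cexp (I * (x * Real.cos t)) =
      cexp (I * x) * cexp (-I * ((√x * √2 * Real.sin (t / 2) : ℝ) : ℂ) ^ 2) := by
    rw [← Complex.exp_add]
    congr 1
    have : x * Real.cos t = x - (√x * √2 * Real.sin (t / 2)) ^ 2 := by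
      have h1 : Real.cos t = 1 - 2 * Real.sin (t / 2) ^ 2 := by
        rw [← Real.cos_sq_add_sin_sq (t / 2)]
        have := Real.cos_two_mul' (t / 2)
        rw [show 2 * (t / 2) = t by ring] at this
        linarith
      rw [h1, mul_pow, mul_pow, Real.sq_sqrt hx.le, Real.sq_sqrt (by norm_num)]
      ring
    have := congrArg (fun y : ℝ => (y : ℂ)) this
    push_cast at this ⊢
    rw [this]; ring
  rw [e3]
  have : ((√2 : ℝ) : ℂ) * ((√2 : ℝ) : ℂ) = 2 := by
    rw [← ofReal_mul, Real.mul_self_sqrt (by norm_num)]; simp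
  push_cast
  linear_combination (-(√x : ℂ) * cexp (I * x) * cexp (-I * ((√x : ℂ) * (√2 : ℂ) * Complex.sin (t / 2)) ^ 2) * Complex.cos (t / 2) / 2) * this

open Complex in
lemma sp_lim (μ : ℝ) : Tendsto (fun x : ℝ =>
    (√x : ℂ) * (∫ t in (0:ℝ)..(π / 2), cexp (I * (x * Real.cos t)) * (Real.cos (μ * t) : ℂ)) -
      √(π / 2) * cexp (I * (x - π / 4))) atTop (𝓝 0) := by
  set C : ℝ := μ ^ 2 + 1 / 4 with hC
  have hCd : ∀ (m t : ℝ), HasDerivAt (fun t => Real.cos (m * t)) (-(m * Real.sin (m * t))) t := by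
    intro m t
    have : HasDerivAt (fun t : ℝ => m * t) m t := by simpa using (hasDerivAt_id t).const_mul m
    exact this.cos.congr_deriv (by ring)
  have hSd : ∀ (m t : ℝ), HasDerivAt (fun t => -(m * Real.sin (m * t)))
      (-(m ^ 2 * Real.cos (m * t))) t := by
    intro m t
    have : HasDerivAt (fun t : ℝ => m * t) m t := by simpa using (hasDerivAt_id t).const_mul m
    exact (this.sin.const_mul m).neg.congr_deriv (by ring)
  have hb : Tendsto (fun x : ℝ => 20 * C / √x + √2 / √x) atTop (𝓝 0) := by
    have h1 : ∀ k : ℝ, Tendsto (fun x : ℝ => k / √x) atTop (𝓝 0) := fun k =>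
      tendsto_const_nhds.div_atTop Real.tendsto_sqrt_atTop
    simpa using (h1 (20 * C)).add (h1 √2)
  apply squeeze_zero_norm' _ hb
  filter_upwards [eventually_ge_atTop 1] with x hx
  have hx0 : 0 < x := by linarith
  have hs0 : 0 < √x := Real.sqrt_pos.2 hx0
  have R := sp_rem (fun t => Real.cos (μ * t) - Real.cos (1 / 2 * t))
    (fun t => -(μ * Real.sin (μ * t)) - -(1 / 2 * Real.sin (1 / 2 * t)))
    (fun t => -(μ ^ 2 * Real.cos (μ * t)) - -((1 / 2) ^ 2 * Real.cos (1 / 2 * t))) C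
    (by simp) (by simp) (fun t => (hCd μ t).sub (hCd (1 / 2) t))
    (fun t => (hSd μ t).sub (hSd (1 / 2) t))
    (by
      intro t
      refine (abs_sub _ _).trans ?_
      rw [abs_neg, abs_neg, abs_mul, abs_mul, abs_of_nonneg (sq_nonneg μ), hC]
      have h1 := Real.abs_cos_le_one (μ * t)
      have h2 := Real.abs_cos_le_one (1 / 2 * t)
      have h3 : |((1:ℝ) / 2) ^ 2| = 1 / 4 := by norm_num
      rw [h3]
      nlinarith [sq_nonneg μ])
    x hx
  have M := sp_main x hx0
  have F := fresnel_bound √x hs0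
  rw [fresnel_const] at F
  have split : ∫ t in (0:ℝ)..(π / 2), cexp (I * (x * Real.cos t)) * (Real.cos (μ * t) : ℂ) =
      (∫ t in (0:ℝ)..(π / 2), cexp (I * (x * Real.cos t)) *
        ((Real.cos (μ * t) - Real.cos (1 / 2 * t) : ℝ) : ℂ)) +
      ∫ t in (0:ℝ)..(π / 2), cexp (I * (x * Real.cos t)) * (Real.cos (t / 2) : ℂ) := by
    rw [← intervalIntegral.integral_add]
    · apply intervalIntegral.integral_congr
      intro t _
      simp only []
      rw [show (1:ℝ) / 2 * t = t / 2 by ring]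
      push_cast
      ring
    all_goals (apply Continuous.intervalIntegrable; fun_prop)
  have hconst : (√(π / 2) : ℂ) * cexp (I * (x - π / 4)) =
      √2 * cexp (I * x) * (√π * cexp (-I * (π / 4)) / 2) := by
    have h1 : √(π / 2) = √2 * √π / 2 := by
      rw [Real.sqrt_div pi_pos.le]
      have : √2 * √2 = 2 := Real.mul_self_sqrt (by norm_num)
      have : √2 ≠ 0 := by positivity
      field_simp
      nlinarith
    rw [h1, mul_sub, Complex.exp_sub, neg_mul, Complex.exp_neg]
    push_cast
    ring
  rw [split, mul_add, M, hconst, add_sub_assoc, ← mul_sub]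
  refine (norm_add_le _ _).trans (add_le_add ?_ ?_)
  · rw [norm_mul, Complex.norm_real, Real.norm_eq_abs, abs_of_pos hs0]
    calc _ ≤ √x * (20 * C / x) := by gcongr
      _ = 20 * C / √x := by
        nth_rewrite 2 [← Real.mul_self_sqrt hx0.le]
        field_simp
  · have e : ‖cexp (I * x)‖ = 1 := by rw [mul_comm, Complex.norm_exp_ofReal_mul_I]
    rw [norm_mul, norm_mul, e, Complex.norm_real, Real.norm_eq_abs,
      abs_of_nonneg (Real.sqrt_nonneg 2), mul_one, div_eq_mul_one_div √2]
    exact mul_le_mul_of_nonneg_left F (Real.sqrt_nonneg 2)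

open Complex in
lemma bF0_eq (μ x : ℝ) : bF0 μ x = 2 * (cexp (-I * (μ * π / 2)) *
    ∫ t in (0:ℝ)..(π / 2), cexp (I * (x * Real.cos t)) * (Real.cos (μ * t) : ℂ)).re := by
  have ii : ∀ a c, IntervalIntegrable (fun t : ℝ => Real.cos (x * Real.sin t - μ * t))
      volume a c := by
    intro a c; apply Continuous.intervalIntegrable; fun_prop
  have h1 : ∫ t in (0:ℝ)..(π / 2), Real.cos (x * Real.sin t - μ * t) =
      ∫ t in (0:ℝ)..(π / 2), Real.cos (x * Real.sin (π / 2 - t) - μ * (π / 2 - t)) := by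
    rw [intervalIntegral.integral_comp_sub_left (fun t => Real.cos (x * Real.sin t - μ * t))]
    simp
  have h2 : ∫ t in (π / 2)..π, Real.cos (x * Real.sin t - μ * t) =
      ∫ t in (0:ℝ)..(π / 2), Real.cos (x * Real.sin (π / 2 + t) - μ * (π / 2 + t)) := by
    rw [intervalIntegral.integral_comp_add_left (fun t => Real.cos (x * Real.sin t - μ * t))]
    simp
  rw [bF0, ← intervalIntegral.integral_add_adjacent_intervals (ii 0 (π / 2)) (ii (π / 2) π), h1, h2,
    ← intervalIntegral.integral_add, ← intervalIntegral.integral_const_mul]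
  rotate_left
  · apply Continuous.intervalIntegrable; fun_prop
  · apply Continuous.intervalIntegrable; fun_prop
  have h3 := Complex.reCLM.intervalIntegral_comp_comm (μ := volume) (a := 0) (b := π / 2)
    (f := fun t : ℝ => cexp (-I * (μ * π / 2)) *
      (cexp (I * (x * Real.cos t)) * (Real.cos (μ * t) : ℂ)))
    (by apply Continuous.intervalIntegrable; fun_prop)
  simp only [Complex.reCLM_apply] at h3
  rw [← h3, ← intervalIntegral.integral_const_mul]
  apply intervalIntegral.integral_congr
  intro t _
  simp only []
  rw [← mul_assoc, ← Complex.exp_add, Complex.re_mul_ofReal]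
  have : -I * (μ * π / 2) + I * (x * Real.cos t) =
      ((x * Real.cos t - μ * π / 2 : ℝ) : ℂ) * I := by push_cast; ring
  rw [this, Complex.exp_ofReal_mul_I_re, Real.sin_pi_div_two_sub, add_comm (π / 2) t,
    Real.sin_add_pi_div_two]
  have e1 : x * Real.cos t - μ * (π / 2 - t) = (x * Real.cos t - μ * π / 2) + μ * t := by ring
  have e2 : x * Real.cos t - μ * (t + π / 2) = (x * Real.cos t - μ * π / 2) - μ * t := by ring
  rw [e1, e2, Real.cos_add (x * Real.cos t - μ * π / 2) (μ * t), Real.cos_sub (x * Real.cos t - μ * π / 2) (μ * t)]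
  ring

open Complex in
lemma bF0_lim (μ : ℝ) : Tendsto (fun x : ℝ => √x * bF0 μ x -
    2 * √(π / 2) * Real.cos (x - μ * π / 2 - π / 4)) atTop (𝓝 0) := by
  have h := (Complex.continuous_re.tendsto _).comp
    ((sp_lim μ).const_mul (2 * cexp (-I * (μ * π / 2))))
  simp only [mul_zero, Complex.zero_re] at h
  refine h.congr fun x => ?_
  simp only [Function.comp]
  rw [bF0_eq]
  set J := ∫ t in (0:ℝ)..(π / 2), cexp (I * (x * Real.cos t)) * (Real.cos (μ * t) : ℂ)
  have e1 : 2 * cexp (-I * (μ * π / 2)) * ((√x : ℂ) * J - √(π / 2) * cexp (I * (x - π / 4))) =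
      ((2 * √x : ℝ) : ℂ) * (cexp (-I * (μ * π / 2)) * J) - ((2 * √(π / 2) : ℝ) : ℂ) *
        cexp (((x - μ * π / 2 - π / 4 : ℝ) : ℂ) * I) := by
    have : ((x - μ * π / 2 - π / 4 : ℝ) : ℂ) * I = -I * (μ * π / 2) + I * (x - π / 4) := by
      push_cast; ring
    rw [this, Complex.exp_add]
    push_cast
    ring
  rw [e1, Complex.sub_re, Complex.re_ofReal_mul, Complex.re_ofReal_mul,
    Complex.exp_ofReal_mul_I_re]
  ring

lemma bF1_eq (ν x : ℝ) : bF1 ν x = 1 / 2 * (bF0 (ν - 1) x - bF0 (ν + 1) x) := by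
  rw [bF1, bF0, bF0, ← intervalIntegral.integral_sub, ← intervalIntegral.integral_const_mul]
  · apply intervalIntegral.integral_congr
    intro t _
    simp only []
    have e1 : x * sin t - (ν - 1) * t = (x * sin t - ν * t) + t := by ring
    have e2 : x * sin t - (ν + 1) * t = (x * sin t - ν * t) - t := by ring
    rw [e1, e2, cos_add, cos_sub (x * sin t - ν * t) t]
    ring
  all_goals (apply Continuous.intervalIntegrable; fun_prop)

lemma bF1_lim (ν : ℝ) : Tendsto (fun x : ℝ => √x * bF1 ν x +
    2 * √(π / 2) * sin (x - ν * π / 2 - π / 4)) atTop (𝓝 0) := by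
  have h := ((bF0_lim (ν - 1)).sub (bF0_lim (ν + 1))).const_mul (1 / 2)
  simp only [sub_zero, mul_zero] at h
  refine h.congr fun x => ?_
  rw [bF1_eq]
  have e1 : x - (ν - 1) * π / 2 - π / 4 = (x - ν * π / 2 - π / 4) + π / 2 := by ring
  have e2 : x - (ν + 1) * π / 2 - π / 4 = (x - ν * π / 2 - π / 4) - π / 2 := by ring
  rw [e1, e2, cos_add_pi_div_two, cos_sub_pi_div_two]
  ring

lemma bG_lim (ν : ℝ) (k : ℕ) (hν : 0 ≤ ν) : Tendsto (fun x : ℝ => √x * bG ν k x) atTop (𝓝 0) := by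
  have hb : Tendsto (fun x : ℝ => k.factorial * (2 / x) ^ k * (2 / √x)) atTop
      (𝓝 (k.factorial * 0 ^ k * 0)) := by
    apply Tendsto.mul
    · apply Tendsto.const_mul
      exact (tendsto_const_nhds.div_atTop tendsto_id).pow k
    · exact tendsto_const_nhds.div_atTop Real.tendsto_sqrt_atTop
  rw [mul_zero] at hb
  apply squeeze_zero_norm' _ hb
  filter_upwards [eventually_gt_atTop 0] with x hx
  have hs0 : 0 < √x := Real.sqrt_pos.2 hx
  rw [norm_mul, Real.norm_eq_abs, Real.norm_eq_abs, abs_of_pos hs0]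
  calc _ ≤ √x * (k.factorial * (2 / x) ^ k * (2 / x)) := by
        gcongr; exact bG_le ν x k hν hx
    _ = k.factorial * (2 / x) ^ k * (√x * (2 / x)) := by ring
    _ = _ := by
      congr 1
      nth_rewrite 2 [← Real.mul_self_sqrt hx.le]
      field_simp

lemma const_eq : 2 * √(π / 2) / π = √(2 / π) := by
  rw [Real.sqrt_div pi_pos.le, Real.sqrt_div (by norm_num)]
  have h1 : √2 * √2 = 2 := Real.mul_self_sqrt (by norm_num)
  have h2 : √π * √π = π := Real.mul_self_sqrt pi_pos.le
  have : 0 < √2 := by positivity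
  have : 0 < √π := by positivity
  rw [mul_div_assoc', div_div, div_eq_div_iff (by positivity) (by positivity)]
  linear_combination 2 * h2 - π * h1

lemma bJ_lim (ν : ℝ) (hν : 0 ≤ ν) : Tendsto (fun x : ℝ => √x * besselJ ν x -
    √(2 / π) * cos (x - ν * π / 2 - π / 4)) atTop (𝓝 0) := by
  have h := ((bF0_lim ν).const_mul (1 / π)).sub ((bG_lim ν 0 hν).const_mul (sin (ν * π) / π))
  simp only [sub_zero, mul_zero] at h
  refine h.congr fun x => ?_
  rw [besselJ_eq, ← const_eq]
  ring

lemma bJ1_lim (ν : ℝ) (hν : 0 ≤ ν) : Tendsto (fun x : ℝ => √x * bJ1 ν x +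
    √(2 / π) * sin (x - ν * π / 2 - π / 4)) atTop (𝓝 0) := by
  have h := ((bF1_lim ν).const_mul (1 / π)).add ((bG_lim ν 1 hν).const_mul (sin (ν * π) / π))
  simp only [add_zero, mul_zero] at h
  refine h.congr fun x => ?_
  rw [bJ1, ← const_eq]
  ring

/-- The phase. -/
noncomputable def bω (ν x : ℝ) : ℝ := π * (x * gfun (ν / x))

lemma bω_eq (ν x : ℝ) (hx : 0 < x) : bω ν x = √(x ^ 2 - ν ^ 2) - ν * arccos (ν / x) := by
  have h1 : √(x ^ 2 - ν ^ 2) = x * √(1 - (ν / x) ^ 2) := by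
    have : x ^ 2 - ν ^ 2 = x ^ 2 * (1 - (ν / x) ^ 2) := by field_simp
    rw [this, Real.sqrt_mul (by positivity), Real.sqrt_sq hx.le]
  rw [h1, bω, gfun]
  have := pi_pos.ne'
  field_simp

/-- The amplitude. -/
noncomputable def bq (ν x : ℝ) : ℝ := (x ^ 2 - ν ^ 2) ^ ((1 : ℝ) / 4)

lemma bq_pos (ν x : ℝ) (h : 0 < x ^ 2 - ν ^ 2) : 0 < bq ν x := Real.rpow_pos_of_pos h _

lemma bq_pow (ν x : ℝ) (h : 0 < x ^ 2 - ν ^ 2) : bq ν x ^ 4 = x ^ 2 - ν ^ 2 := by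
  rw [bq, ← Real.rpow_natCast, ← Real.rpow_mul h.le]
  norm_num

lemma bq_sq (ν x : ℝ) (h : 0 < x ^ 2 - ν ^ 2) : √(x ^ 2 - ν ^ 2) = bq ν x ^ 2 := by
  rw [← bq_pow ν x h, show bq ν x ^ 4 = (bq ν x ^ 2) ^ 2 by ring, Real.sqrt_sq (sq_nonneg _)]

lemma bq_deriv (ν x : ℝ) (h : 0 < x ^ 2 - ν ^ 2) :
    HasDerivAt (bq ν) (x / (2 * bq ν x ^ 3)) x := by
  have h1 : HasDerivAt (fun x : ℝ => x ^ 2 - ν ^ 2) (2 * x) x := by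
    simpa using (hasDerivAt_pow 2 x).sub_const (ν ^ 2)
  refine (h1.rpow_const (p := 1 / 4) (Or.inl h.ne')).congr_deriv ?_
  have hq := bq_pos ν x h
  have h2 : (x ^ 2 - ν ^ 2) ^ ((1:ℝ) / 4 - 1) = bq ν x / bq ν x ^ 4 := by
    rw [bq_pow ν x h, Real.rpow_sub h, Real.rpow_one, bq]
  rw [h2]
  field_simp
  norm_num
  ring

lemma bω_deriv (ν x : ℝ) (hν : 0 ≤ ν) (hx : ν < x) :
    HasDerivAt (bω ν) (bq ν x ^ 2 / x) x := by
  have hx0 : 0 < x := hν.trans_lt hx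
  have h : 0 < x ^ 2 - ν ^ 2 := by nlinarith
  have hq := bq_pos ν x h
  have heq : bω ν =ᶠ[𝓝 x] fun x => √(x ^ 2 - ν ^ 2) - ν * arccos (ν / x) := by
    filter_upwards [Ioi_mem_nhds hx0] with y hy
    exact bω_eq ν y hy
  have h1 : HasDerivAt (fun x : ℝ => x ^ 2 - ν ^ 2) (2 * x) x := by
    simpa using (hasDerivAt_pow 2 x).sub_const (ν ^ 2)
  have h2 : HasDerivAt (fun x : ℝ => ν / x) (-ν / x ^ 2) x := by
    have := (hasDerivAt_const x ν).div (hasDerivAt_id x) hx0.ne'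
    simp only [zero_mul, mul_one, zero_sub, id] at this
    exact this
  have hlt : ν / x < 1 := (div_lt_one hx0).2 hx
  have hge : 0 ≤ ν / x := by positivity
  have h3 := (Real.hasDerivAt_arccos (x := ν / x) (by linarith) hlt.ne).comp x h2
  refine HasDerivAt.congr_of_eventuallyEq ?_ heq
  refine ((h1.sqrt h.ne').sub (h3.const_mul ν)).congr_deriv ?_
  have h4 : √(1 - (ν / x) ^ 2) = bq ν x ^ 2 / x := by
    rw [← bq_sq ν x h]
    have : 1 - (ν / x) ^ 2 = (x ^ 2 - ν ^ 2) / x ^ 2 := by field_simp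
    rw [this, Real.sqrt_div h.le, Real.sqrt_sq hx0.le]
  rw [h4, bq_sq ν x h]
  have h5 := bq_pow ν x h
  field_simp
  linear_combination -h5

noncomputable def bu (ν x : ℝ) : ℝ := bq ν x * besselJ ν x
noncomputable def bD (ν x : ℝ) : ℝ := x / bq ν x * bJ1 ν x + x ^ 2 / (2 * bq ν x ^ 5) * besselJ ν x
noncomputable def bR (ν x : ℝ) : ℝ := x / bq ν x ^ 6 - 5 * x ^ 3 / (4 * bq ν x ^ 10)

lemma bu_deriv (ν x : ℝ) (hν : 0 ≤ ν) (hx : ν < x) :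
    HasDerivAt (bu ν) (bq ν x ^ 2 / x * bD ν x) x := by
  have hx0 : 0 < x := hν.trans_lt hx
  have h : 0 < x ^ 2 - ν ^ 2 := by nlinarith
  have hq := bq_pos ν x h
  refine ((bq_deriv ν x h).mul (bJ_deriv ν x hν hx0)).congr_deriv ?_
  rw [bD]
  field_simp
  ring

lemma bD_deriv (ν x : ℝ) (hν : 0 ≤ ν) (hx : ν < x) :
    HasDerivAt (bD ν) (-(bq ν x ^ 2 / x) * bu ν x + bR ν x * bu ν x) x := by
  have hx0 : 0 < x := hν.trans_lt hx
  have h : 0 < x ^ 2 - ν ^ 2 := by nlinarith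
  have hq := bq_pos ν x h
  have d1 := ((hasDerivAt_id x).div (bq_deriv ν x h) hq.ne').mul (bJ1_deriv ν x hν hx0)
  have d2 := ((hasDerivAt_pow 2 x).div (((bq_deriv ν x h).pow 5).const_mul 2)
    (by simp; positivity)).mul (bJ_deriv ν x hν hx0)
  refine (d1.add d2).congr_deriv ?_
  have ode := bJ_ode ν x hν hx0
  rw [← bq_pow ν x h] at ode
  have hJ2 : bJ2 ν x = -(x * bJ1 ν x + bq ν x ^ 4 * besselJ ν x) / x ^ 2 := by
    field_simp
    linear_combination ode
  rw [hJ2, bu, bR]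
  simp only [Pi.div_apply, Pi.pow_apply, id]
  field_simp
  push_cast
  ring

lemma tendsto_zero_mul_of_le_one {f g : ℝ → ℝ} (hf : Tendsto f atTop (𝓝 0))
    (hg : ∀ x, |g x| ≤ 1) : Tendsto (fun x => f x * g x) atTop (𝓝 0) := by
  have h1 : Tendsto (fun x => |f x|) atTop (𝓝 0) := by simpa using hf.abs
  refine squeeze_zero_norm (fun x => ?_) h1
  rw [Real.norm_eq_abs, abs_mul]
  exact mul_le_of_le_one_right (abs_nonneg _) (hg x)

lemma div_tendsto_zero (ν : ℝ) : Tendsto (fun x : ℝ => ν / x) atTop (𝓝 0) :=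
  tendsto_const_nhds.div_atTop tendsto_id

lemma br1_lim (ν : ℝ) : Tendsto (fun x => bq ν x / √x) atTop (𝓝 1) := by
  have h1 : Tendsto (fun x : ℝ => (1 - (ν / x) ^ 2) ^ ((1:ℝ) / 4)) atTop (𝓝 1) := by
    have h := (((div_tendsto_zero ν).pow 2).const_sub 1).rpow_const (p := (1:ℝ) / 4)
      (Or.inr (by norm_num))
    simpa using h
  refine h1.congr' ?_
  filter_upwards [eventually_gt_atTop |ν|] with x hx
  have hx0 : 0 < x := (abs_nonneg ν).trans_lt hx
  have h : 0 < x ^ 2 - ν ^ 2 := by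
    have := sq_lt_sq' (by linarith [abs_nonneg ν]) hx
    rw [sq_abs] at this
    linarith
  have e : 1 - (ν / x) ^ 2 = (x ^ 2 - ν ^ 2) / x ^ 2 := by field_simp
  rw [e, Real.div_rpow h.le (by positivity), bq]
  congr 1
  rw [Real.sqrt_eq_rpow, ← Real.rpow_natCast, ← Real.rpow_mul hx0.le]
  norm_num

lemma bψ_lim (ν : ℝ) (hν : 0 ≤ ν) :
    Tendsto (fun x => bω ν x - (x - ν * π / 2 - π / 4)) atTop (𝓝 (π / 4)) := by
  have h1 : Tendsto (fun x : ℝ => ν * arccos (ν / x)) atTop (𝓝 (ν * (π / 2))) := by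
    have := (Real.continuous_arccos.tendsto 0).comp (div_tendsto_zero ν)
    rw [Real.arccos_zero] at this
    exact this.const_mul ν
  have h2 : Tendsto (fun x : ℝ => √(x ^ 2 - ν ^ 2) - x) atTop (𝓝 0) := by
    refine squeeze_zero_norm' ?_ (div_tendsto_zero (ν ^ 2))
    filter_upwards [eventually_gt_atTop ν] with x hx
    have hx0 : 0 < x := hν.trans_lt hx
    have h : 0 < x ^ 2 - ν ^ 2 := by nlinarith
    have hs := Real.sq_sqrt h.le
    have hs0 := Real.sqrt_nonneg (x ^ 2 - ν ^ 2)
    have hle : √(x ^ 2 - ν ^ 2) ≤ x := by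
      rw [Real.sqrt_le_left hx0.le]
      nlinarith [sq_nonneg ν]
    rw [Real.norm_eq_abs, abs_of_nonpos (by linarith), le_div_iff₀ hx0]
    nlinarith
  have h3 := (h2.sub h1).add_const (ν * π / 2 + π / 4)
  have e : (0 - ν * (π / 2) + (ν * π / 2 + π / 4)) = π / 4 := by ring
  rw [e] at h3
  refine h3.congr' ?_
  filter_upwards [eventually_gt_atTop 0] with x hx
  rw [bω_eq ν x hx]
  ring

lemma bu_lim (ν : ℝ) (hν : 0 ≤ ν) :
    Tendsto (fun x => bu ν x - √(2/π) * cos (x - ν * π / 2 - π / 4)) atTop (𝓝 0) := by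
  have h1 := (br1_lim ν).mul (bJ_lim ν hν)
  have h2 : Tendsto (fun x => (bq ν x / √x - 1) * √(2/π)) atTop (𝓝 0) := by
    simpa using ((br1_lim ν).sub_const 1).mul_const (√(2/π))
  have h3 := h1.add (tendsto_zero_mul_of_le_one h2
    (fun x => Real.abs_cos_le_one (x - ν * π / 2 - π / 4)))
  rw [mul_zero, add_zero] at h3
  refine h3.congr' ?_
  filter_upwards [eventually_gt_atTop 0] with x hx
  have : 0 < √x := Real.sqrt_pos.2 hx
  rw [bu]
  field_simp
  ring

lemma bD_lim (ν : ℝ) (hν : 0 ≤ ν) :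
    Tendsto (fun x => bD ν x + √(2/π) * sin (x - ν * π / 2 - π / 4)) atTop (𝓝 0) := by
  have hr2 : Tendsto (fun x => (bq ν x / √x)⁻¹) atTop (𝓝 1) := by
    simpa using (br1_lim ν).inv₀ one_ne_zero
  have hr3 : Tendsto (fun x => (bq ν x / √x)⁻¹ ^ 5 * ((1 / 2) / x)) atTop (𝓝 0) := by
    simpa using (hr2.pow 5).mul (div_tendsto_zero (1 / 2))
  have h1 := hr2.mul (bJ1_lim ν hν)
  have h2 : Tendsto (fun x => (1 - (bq ν x / √x)⁻¹) * √(2/π)) atTop (𝓝 0) := by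
    simpa using (hr2.const_sub 1).mul_const (√(2/π))
  have h3 := tendsto_zero_mul_of_le_one h2
    (fun x => Real.abs_sin_le_one (x - ν * π / 2 - π / 4))
  have h4 := hr3.mul (bJ_lim ν hν)
  have h5 : Tendsto (fun x => ((bq ν x / √x)⁻¹ ^ 5 * ((1 / 2) / x)) * √(2/π)) atTop (𝓝 0) := by
    simpa using hr3.mul_const (√(2/π))
  have h6 := tendsto_zero_mul_of_le_one h5
    (fun x => Real.abs_cos_le_one (x - ν * π / 2 - π / 4))
  have h7 := (h1.add h3).add (h4.add h6)
  simp only [mul_zero, add_zero] at h7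
  refine h7.congr' ?_
  filter_upwards [eventually_gt_atTop ν] with x hx
  have hx0 : 0 < x := hν.trans_lt hx
  have h : 0 < x ^ 2 - ν ^ 2 := by nlinarith
  have hq := bq_pos ν x h
  have hs : 0 < √x := Real.sqrt_pos.2 hx0
  have e1 : (bq ν x / √x)⁻¹ * √x = x / bq ν x := by
    field_simp
    exact Real.sq_sqrt hx0.le
  have e2 : (bq ν x / √x)⁻¹ ^ 5 * ((1 / 2) / x) * √x = x ^ 2 / (2 * bq ν x ^ 5) := by
    field_simp
    have := Real.sq_sqrt hx0.le
    calc √x ^ 6 = (√x ^ 2) ^ 3 := by ring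
      _ = x ^ 3 := by rw [this]
      _ = _ := by ring
  rw [bD, ← e1, ← e2]
  ring

noncomputable def bA (ν x : ℝ) : ℝ := bu ν x * cos (bω ν x) - bD ν x * sin (bω ν x)
noncomputable def bB (ν x : ℝ) : ℝ := bu ν x * sin (bω ν x) + bD ν x * cos (bω ν x)

lemma bA_lim (ν : ℝ) (hν : 0 ≤ ν) :
    Tendsto (bA ν) atTop (𝓝 (√(2/π) * cos (π / 4))) := by
  have h1 := tendsto_zero_mul_of_le_one (bu_lim ν hν) (fun x => Real.abs_cos_le_one (bω ν x))
  have h2 := tendsto_zero_mul_of_le_one (bD_lim ν hν) (fun x => Real.abs_sin_le_one (bω ν x))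
  have h3 := ((Real.continuous_cos.tendsto _).comp (bψ_lim ν hν)).const_mul (√(2/π))
  have h4 := (h1.sub h2).add h3
  rw [sub_zero, zero_add] at h4
  refine h4.congr fun x => ?_
  simp only [Function.comp, bA]
  rw [Real.cos_sub (bω ν x)]
  ring

lemma bB_lim (ν : ℝ) (hν : 0 ≤ ν) :
    Tendsto (bB ν) atTop (𝓝 (√(2/π) * sin (π / 4))) := by
  have h1 := tendsto_zero_mul_of_le_one (bu_lim ν hν) (fun x => Real.abs_sin_le_one (bω ν x))
  have h2 := tendsto_zero_mul_of_le_one (bD_lim ν hν) (fun x => Real.abs_cos_le_one (bω ν x))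
  have h3 := ((Real.continuous_sin.tendsto _).comp (bψ_lim ν hν)).const_mul (√(2/π))
  have h4 := (h1.add h2).add h3
  rw [add_zero, zero_add] at h4
  refine h4.congr fun x => ?_
  simp only [Function.comp, bB]
  rw [Real.sin_sub (bω ν x)]
  ring

lemma bA_deriv (ν x : ℝ) (hν : 0 ≤ ν) (hx : ν < x) :
    HasDerivAt (bA ν) (-(bR ν x * bu ν x * sin (bω ν x))) x := by
  have hu := bu_deriv ν x hν hx
  have hD := bD_deriv ν x hν hx
  have hw := bω_deriv ν x hν hx
  refine ((hu.mul hw.cos).sub (hD.mul hw.sin)).congr_deriv ?_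
  ring

lemma bB_deriv (ν x : ℝ) (hν : 0 ≤ ν) (hx : ν < x) :
    HasDerivAt (bB ν) (bR ν x * bu ν x * cos (bω ν x)) x := by
  have hu := bu_deriv ν x hν hx
  have hD := bD_deriv ν x hν hx
  have hw := bω_deriv ν x hν hx
  refine ((hu.mul hw.sin).add (hD.mul hw.cos)).congr_deriv ?_
  ring

lemma bu_le (ν x : ℝ) : |bu ν x| ≤ √(bA ν x ^ 2 + bB ν x ^ 2) := by
  have e : bA ν x ^ 2 + bB ν x ^ 2 = bu ν x ^ 2 + bD ν x ^ 2 := by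
    rw [bA, bB]
    linear_combination (bu ν x ^ 2 + bD ν x ^ 2) * Real.sin_sq_add_cos_sq (bω ν x)
  rw [e]
  exact Real.abs_le_sqrt (by nlinarith [sq_nonneg (bD ν x)])

lemma bR_le (ν x m : ℝ) (hν : 0 ≤ ν) (hx : ν < x) (hm : 0 < m)
    (h : m ^ 2 * x ^ 2 ≤ x ^ 2 - ν ^ 2) :
    |bR ν x| ≤ (1 / m ^ 3 + 5 / (4 * m ^ 5)) / x ^ 2 := by
  have hx0 : 0 < x := hν.trans_lt hx
  have h0 : 0 < x ^ 2 - ν ^ 2 := by nlinarith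
  have hq := bq_pos ν x h0
  have h1 : m * x ≤ bq ν x ^ 2 := by
    rw [← bq_sq ν x h0]
    apply Real.le_sqrt_of_sq_le
    rw [mul_pow]; exact h
  have e1 : |x / bq ν x ^ 6| ≤ 1 / m ^ 3 / x ^ 2 := by
    rw [abs_of_pos (by positivity)]
    calc x / bq ν x ^ 6 = x / (bq ν x ^ 2) ^ 3 := by ring
      _ ≤ x / (m * x) ^ 3 := by gcongr
      _ = _ := by field_simp
  have e2 : |5 * x ^ 3 / (4 * bq ν x ^ 10)| ≤ 5 / (4 * m ^ 5) / x ^ 2 := by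
    rw [abs_of_pos (by positivity)]
    calc 5 * x ^ 3 / (4 * bq ν x ^ 10) = 5 * x ^ 3 / (4 * (bq ν x ^ 2) ^ 5) := by ring
      _ ≤ 5 * x ^ 3 / (4 * (m * x) ^ 5) := by gcongr
      _ = _ := by field_simp
  rw [bR, add_div]
  exact (abs_sub _ _).trans (add_le_add e1 e2)

lemma abs_mul3_le {R u t b s : ℝ} (hR : |R| ≤ b) (hu : |u| ≤ s) (ht : |t| ≤ 1) :
    |R * u * t| ≤ b * s := by
  rw [abs_mul, abs_mul]
  have h1 : |R| * |u| ≤ b * s :=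
    mul_le_mul hR hu (abs_nonneg _) ((abs_nonneg _).trans hR)
  exact (mul_le_of_le_one_right (by positivity) ht).trans h1

/-- asymptotics of `J_ν(x)` in the oscillatory regime `x ≥ max((1+c)ν, 2)`. -/
theorem besselJ_asymptotics_away (c : ℝ) (hc : 0 < c) :
    ∃ C : ℝ, 0 < C ∧ ∀ ν x : ℝ, 0 ≤ ν → max ((1 + c) * ν) 2 ≤ x →
      |Real.sqrt (π / 2) * (x ^ 2 - ν ^ 2) ^ ((1 : ℝ) / 4) * besselJ ν x -
          Real.sin (π * (x * gfun (ν / x)) + π / 4)| ≤ C / x := by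
  obtain ⟨m, hm, hm2⟩ : ∃ m : ℝ, 0 < m ∧ m ^ 2 = 1 - 1 / (1 + c) ^ 2 := by
    have h : 0 < 1 - 1 / (1 + c) ^ 2 := by
      rw [sub_pos, div_lt_one (by positivity)]
      nlinarith
    exact ⟨√(1 - 1 / (1 + c) ^ 2), Real.sqrt_pos.2 h, Real.sq_sqrt h.le⟩
  set K : ℝ := 1 / m ^ 3 + 5 / (4 * m ^ 5) with hKdef
  have hK : 0 < K := by positivity
  set a : ℝ := √(2/π) * cos (π / 4) with ha
  set b : ℝ := √(2/π) * sin (π / 4) with hb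
  have hπ := pi_pos
  refine ⟨√(π / 2) * (2 * (K * √((a ^ 2 + b ^ 2) * exp (2 * K)))) + 1, by positivity, ?_⟩
  intro ν x hν hx
  have hx1 : (1 + c) * ν ≤ x := (le_max_left _ _).trans hx
  have hx2 : 2 ≤ x := (le_max_right _ _).trans hx
  have hx0 : 0 < x := by linarith
  have hlt : ∀ y, x ≤ y → ν < y := by
    intro y hy
    rcases hν.eq_or_lt with h | h
    · linarith
    · nlinarith
  have hR : ∀ y, x ≤ y → |bR ν y| ≤ K / y ^ 2 := by
    intro y hy
    refine bR_le ν y m hν (hlt y hy) hm ?_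
    rw [hm2]
    have h1 : ν ≤ y / (1 + c) := by
      rw [le_div_iff₀ (by linarith)]; linarith
    have h2 : ν ^ 2 ≤ (y / (1 + c)) ^ 2 := by gcongr
    rw [div_pow] at h2
    have : (1 - 1 / (1 + c) ^ 2) * y ^ 2 = y ^ 2 - y ^ 2 / (1 + c) ^ 2 := by ring
    linarith
  obtain ⟨h1, h2⟩ := wkb_bound (bA ν) (bB ν) _ _ K a b x hK.le hx0
    (fun y hy => bA_deriv ν y hν (hlt y hy)) (fun y hy => bB_deriv ν y hν (hlt y hy))
    (fun y hy => by
      rw [abs_neg]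
      exact abs_mul3_le (hR y hy) (bu_le ν y) (Real.abs_sin_le_one _))
    (fun y hy => abs_mul3_le (hR y hy) (bu_le ν y) (Real.abs_cos_le_one _))
    (bA_lim ν hν) (bB_lim ν hν)
  have h3 : K * √((a ^ 2 + b ^ 2) * exp (4 * K / x)) / x ≤
      K * √((a ^ 2 + b ^ 2) * exp (2 * K)) / x := by
    have : 4 * K / x ≤ 2 * K := by
      rw [div_le_iff₀ hx0]; nlinarith
    gcongr
  have hk : √(π / 2) * √(2 / π) = 1 := by
    rw [← Real.sqrt_mul (by positivity), show π / 2 * (2 / π) = 1 by field_simp, Real.sqrt_one]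
  have e : √(π / 2) * (x ^ 2 - ν ^ 2) ^ ((1 : ℝ) / 4) * besselJ ν x -
      sin (π * (x * gfun (ν / x)) + π / 4) =
      √(π / 2) * ((bA ν x - a) * cos (bω ν x) + (bB ν x - b) * sin (bω ν x)) := by
    have e1 : bu ν x = bA ν x * cos (bω ν x) + bB ν x * sin (bω ν x) := by
      rw [bA, bB]
      linear_combination (-bu ν x) * Real.sin_sq_add_cos_sq (bω ν x)
    have e2 : √(π / 2) * (x ^ 2 - ν ^ 2) ^ ((1 : ℝ) / 4) * besselJ ν x = √(π / 2) * bu ν x := by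
      rw [bu, bq, mul_assoc]
    rw [e2, e1, show π * (x * gfun (ν / x)) = bω ν x from rfl, Real.sin_add, ha, hb,
      Real.sin_pi_div_four, Real.cos_pi_div_four]
    linear_combination (sin (bω ν x) + cos (bω ν x)) * (√2 / 2) * hk
  rw [e, abs_mul, abs_of_nonneg (Real.sqrt_nonneg _)]
  have h4 : |(bA ν x - a) * cos (bω ν x) + (bB ν x - b) * sin (bω ν x)| ≤
      2 * (K * √((a ^ 2 + b ^ 2) * exp (2 * K)) / x) := by
    refine (abs_add_le _ _).trans ?_
    rw [abs_mul, abs_mul]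
    have i1 := mul_le_of_le_one_right (abs_nonneg (bA ν x - a)) (Real.abs_cos_le_one (bω ν x))
    have i2 := mul_le_of_le_one_right (abs_nonneg (bB ν x - b)) (Real.abs_sin_le_one (bω ν x))
    linarith
  refine (mul_le_mul_of_nonneg_left h4 (Real.sqrt_nonneg _)).trans ?_
  rw [add_div]
  have : 0 < 1 / x := by positivity
  have e5 : √(π / 2) * (2 * (K * √((a ^ 2 + b ^ 2) * exp (2 * K)) / x)) =
    √(π / 2) * (2 * (K * √((a ^ 2 + b ^ 2) * exp (2 * K)))) / x := by ring
  linarith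
end

section
/- There exists a constant C > 0 such that for all ν ≥ 0 and x > 0 with x + ν ≥ 2, | ∫₀^∞ e^{−x sinh t − ν t} dt − 1/(x+ν) | ≤ C/(x+ν)³. -/
open Real MeasureTheory Set

/-- The error integral. -/
lemma aux_error_integral (s : ℝ) (hs : 2 ≤ s) :
    IntegrableOn (fun t : ℝ => Real.exp (-s * t) * (Real.sinh t - t)) (Set.Ioi 0) ∧
    ∫ t in Set.Ioi (0:ℝ), Real.exp (-s * t) * (Real.sinh t - t) = 1 / (s ^ 2 * (s ^ 2 - 1)) := by
  have h1 : s - 1 ≠ 0 := by intro h; linarith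
  have h2 : s + 1 ≠ 0 := by intro h; linarith
  have h0 : s ≠ 0 := by intro h; linarith
  let F : ℝ → ℝ := fun t => -(Real.exp (-(s - 1) * t) / (2 * (s - 1)))
    + Real.exp (-(s + 1) * t) / (2 * (s + 1)) + (t / s + 1 / s ^ 2) * Real.exp (-s * t)
  have hexp : ∀ a t : ℝ, HasDerivAt (fun t : ℝ => Real.exp (a * t)) (Real.exp (a * t) * a) t := by
    intro a t
    have := ((hasDerivAt_id t).const_mul a).exp
    simpa using this
  have hd : ∀ t ∈ Set.Ici (0:ℝ),
      HasDerivAt F (Real.exp (-s * t) * (Real.sinh t - t)) t := by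
    intro t _
    have hA := ((hexp (-(s - 1)) t).div_const (2 * (s - 1))).neg
    have hB := (hexp (-(s + 1)) t).div_const (2 * (s + 1))
    have hC := (((hasDerivAt_id t).div_const s).add_const (1 / s ^ 2)).mul (hexp (-s) t)
    have hD := (hA.add hB).add hC
    refine hD.congr_deriv ?_
    have e1 : Real.exp (-(s - 1) * t) = Real.exp (-s * t) * Real.exp t := by
      rw [← Real.exp_add]; congr 1; ring
    have e2 : Real.exp (-(s + 1) * t) = Real.exp (-s * t) * Real.exp (-t) := by
      rw [← Real.exp_add]; congr 1; ring
    rw [e1, e2, Real.sinh_eq]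
    simp only [id]
    field_simp
    ring
  have hnn : ∀ t ∈ Set.Ioi (0:ℝ), 0 ≤ Real.exp (-s * t) * (Real.sinh t - t) := by
    intro t ht
    have : t ≤ Real.sinh t := Real.self_le_sinh_iff.2 (le_of_lt ht)
    exact mul_nonneg (Real.exp_pos _).le (by linarith)
  have hE : ∀ a : ℝ, 0 < a →
      Filter.Tendsto (fun t : ℝ => Real.exp (-a * t)) Filter.atTop (nhds 0) := by
    intro a ha
    refine Real.tendsto_exp_atBot.comp ?_
    exact Filter.tendsto_id.const_mul_atTop_of_neg (by linarith)
  have hT : Filter.Tendsto (fun t : ℝ => t * Real.exp (-s * t)) Filter.atTop (nhds 0) := by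
    have h := (Real.tendsto_pow_mul_exp_neg_atTop_nhds_zero 1).comp
      (Filter.tendsto_id.const_mul_atTop (show (0:ℝ) < s by linarith))
    have h' := h.const_mul (1 / s)
    rw [mul_zero] at h'
    refine h'.congr ?_
    intro t
    simp only [Function.comp, id, pow_one]
    rw [neg_mul]
    field_simp
  have hlim : Filter.Tendsto F Filter.atTop (nhds 0) := by
    have hA := ((hE (s - 1) (by linarith)).div_const (2 * (s - 1))).neg
    have hB := (hE (s + 1) (by linarith)).div_const (2 * (s + 1))
    have hC := (hT.const_mul (1 / s)).add ((hE s (by linarith)).const_mul (1 / s ^ 2))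
    have hD := (hA.add hB).add hC
    simp only [zero_div, neg_zero, add_zero, mul_zero] at hD
    refine hD.congr ?_
    intro t
    simp only [F]
    ring
  refine ⟨integrableOn_Ioi_deriv_of_nonneg' hd hnn hlim, ?_⟩
  rw [integral_Ioi_of_hasDerivAt_of_nonneg' hd hnn hlim]
  simp only [F, mul_zero, Real.exp_zero]
  have h3 : s ^ 2 - 1 ≠ 0 := by
    rw [show s ^ 2 - 1 = (s - 1) * (s + 1) by ring]
    exact mul_ne_zero h1 h2
  field_simp
  ring

/-- the asymptotics `∫₀^∞ e^{-x sinh t - ν t} dt = 1/(x+ν) + O((x+ν)^{-3})`. -/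
theorem integral_exp_sinh_asymptotics :
    ∃ C : ℝ, 0 < C ∧ ∀ ν x : ℝ, 0 ≤ ν → 0 < x → 2 ≤ x + ν →
      |(∫ t in Set.Ioi (0:ℝ), Real.exp (-x * Real.sinh t - ν * t)) - 1 / (x + ν)| ≤
        C / (x + ν) ^ 3 := by
  refine ⟨4 / 3, by norm_num, ?_⟩
  intro ν x hν hx hs
  obtain ⟨s, rfl⟩ : ∃ s, ν = s - x := ⟨x + ν, by ring⟩
  have hsx : x + (s - x) = s := by ring
  rw [hsx] at hs ⊢
  obtain ⟨hGi, hG⟩ := aux_error_integral s hs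
  have hs0 : 0 < s := by linarith
  have hEi : IntegrableOn (fun t : ℝ => Real.exp (-s * t)) (Set.Ioi 0) :=
    exp_neg_integrableOn_Ioi 0 hs0
  have hE : ∫ t in Set.Ioi (0:ℝ), Real.exp (-s * t) = 1 / s := by
    rw [integral_exp_mul_Ioi (by linarith) 0]
    simp
  have hfac : ∀ t : ℝ, Real.exp (-x * Real.sinh t - (s - x) * t)
      = Real.exp (-s * t) * Real.exp (-(x * (Real.sinh t - t))) := by
    intro t; rw [← Real.exp_add]; congr 1; ring
  have hup : ∀ t ∈ Set.Ioi (0:ℝ),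
      Real.exp (-x * Real.sinh t - (s - x) * t) ≤ Real.exp (-s * t) := by
    intro t ht
    have h : t ≤ Real.sinh t := Real.self_le_sinh_iff.2 (le_of_lt ht)
    apply Real.exp_le_exp.2
    nlinarith [mul_nonneg hx.le (sub_nonneg.2 h)]
  have hlo : ∀ t ∈ Set.Ioi (0:ℝ),
      Real.exp (-s * t) - x * (Real.exp (-s * t) * (Real.sinh t - t))
        ≤ Real.exp (-x * Real.sinh t - (s - x) * t) := by
    intro t _
    rw [hfac]
    have h := Real.add_one_le_exp (-(x * (Real.sinh t - t)))
    nlinarith [mul_le_mul_of_nonneg_left h (Real.exp_pos (-s * t)).le]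
  have hFi : IntegrableOn (fun t : ℝ => Real.exp (-x * Real.sinh t - (s - x) * t))
      (Set.Ioi 0) := by
    refine Integrable.mono' hEi ?_ ?_
    · exact Continuous.aestronglyMeasurable (by fun_prop)
    · refine (ae_restrict_iff' measurableSet_Ioi).2 (Filter.Eventually.of_forall ?_)
      intro t ht
      rw [Real.norm_eq_abs, abs_of_pos (Real.exp_pos _)]
      exact hup t ht
  have hU := setIntegral_mono_on hFi hEi measurableSet_Ioi hup
  have hL := setIntegral_mono_on (hEi.sub (hGi.const_mul x)) hFi measurableSet_Ioi hlo
  simp only [Pi.sub_apply] at hL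
  rw [integral_sub hEi (hGi.const_mul x), integral_const_mul, hG, hE] at hL
  rw [hE] at hU
  have hpos : 0 < s ^ 2 - 1 := by nlinarith
  have hb : x * (1 / (s ^ 2 * (s ^ 2 - 1))) ≤ 4 / 3 / s ^ 3 := by
    calc x * (1 / (s ^ 2 * (s ^ 2 - 1))) ≤ s * (1 / (s ^ 2 * (s ^ 2 - 1))) := by
          apply mul_le_mul_of_nonneg_right (by linarith) (by positivity)
      _ = 1 / (s * (s ^ 2 - 1)) := by field_simp
      _ ≤ 4 / 3 / s ^ 3 := by
          rw [div_le_div_iff₀ (by positivity) (by positivity)]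
          nlinarith [mul_nonneg hs0.le (show 0 ≤ s ^ 2 - 4 by nlinarith)]
  have hc : 0 ≤ 4 / 3 / s ^ 3 := by positivity
  rw [abs_le]
  constructor <;> linarith
end

section
/- For every c > 0 there exist constants N > 0 and C > 0 such that for all ν ≥ N and all x with ν < x ≤ (1+c)ν and x·g(ν/x) ≥ 1, | √(π/2) · (x² − ν²)^{1/4} · J_ν(x) − sin(π x g(ν/x) + π/4) | ≤ C / (x·g(ν/x)). -/
open Real MeasureTheory Set

lemma bj_d1 (ν x : ℝ) : HasDerivAt (fun x => ∫ θ in (0:ℝ)..π, Real.cos (x * Real.sin θ - ν * θ))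
    (∫ θ in (0:ℝ)..π, -Real.sin θ * Real.sin (x * Real.sin θ - ν * θ)) x := by
  refine (intervalIntegral.hasDerivAt_integral_of_dominated_loc_of_deriv_le
    (F := fun x θ => Real.cos (x * Real.sin θ - ν * θ))
    (F' := fun x θ => -Real.sin θ * Real.sin (x * Real.sin θ - ν * θ))
    (s := Set.univ) (bound := fun _ => 1) (Filter.univ_mem) ?_ ?_ ?_ ?_ ?_ ?_).2
  · exact Filter.Eventually.of_forall fun y => (by fun_prop : Continuous _).aestronglyMeasurable
  · exact (by fun_prop : Continuous _).intervalIntegrable _ _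
  · exact (by fun_prop : Continuous _).aestronglyMeasurable
  · refine Filter.Eventually.of_forall fun t _ y _ => ?_
    rw [Real.norm_eq_abs, abs_mul, abs_neg]
    exact mul_le_one₀ (abs_sin_le_one _) (abs_nonneg _) (abs_sin_le_one _)
  · exact intervalIntegrable_const
  · refine Filter.Eventually.of_forall fun t _ y _ => ?_
    have := (((hasDerivAt_id y).mul_const (Real.sin t)).sub_const (ν * t)).cos
    refine this.congr_deriv ?_
    simp; try ring

lemma bj_d2 (ν x : ℝ) : HasDerivAt
    (fun x => ∫ θ in (0:ℝ)..π, -Real.sin θ * Real.sin (x * Real.sin θ - ν * θ))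
    (∫ θ in (0:ℝ)..π, -Real.sin θ ^ 2 * Real.cos (x * Real.sin θ - ν * θ)) x := by
  refine (intervalIntegral.hasDerivAt_integral_of_dominated_loc_of_deriv_le
    (F := fun x θ => -Real.sin θ * Real.sin (x * Real.sin θ - ν * θ))
    (F' := fun x θ => -Real.sin θ ^ 2 * Real.cos (x * Real.sin θ - ν * θ))
    (s := Set.univ) (bound := fun _ => 1) (Filter.univ_mem) ?_ ?_ ?_ ?_ ?_ ?_).2
  · exact Filter.Eventually.of_forall fun y => (by fun_prop : Continuous _).aestronglyMeasurable
  · exact (by fun_prop : Continuous _).intervalIntegrable _ _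
  · exact (by fun_prop : Continuous _).aestronglyMeasurable
  · refine Filter.Eventually.of_forall fun t _ y _ => ?_
    rw [Real.norm_eq_abs, abs_mul, abs_neg, abs_pow]
    exact mul_le_one₀ (pow_le_one₀ (abs_nonneg _) (abs_sin_le_one _)) (abs_nonneg _)
      (abs_cos_le_one _)
  · exact intervalIntegrable_const
  · refine Filter.Eventually.of_forall fun t _ y _ => ?_
    have := ((((hasDerivAt_id y).mul_const (Real.sin t)).sub_const (ν * t)).sin).const_mul
      (-Real.sin t)
    refine this.congr_deriv ?_
    simp; try ring

/-- exponential domination -/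
lemma bj_dom (a ν : ℝ) (ha : 0 < a) (hν : 0 ≤ ν) (n : ℕ) {x t : ℝ} (hx : a ≤ x) (ht : 0 < t) :
    |Real.sinh t ^ n * Real.exp (-x * Real.sinh t - ν * t)| ≤
      ((n.factorial : ℝ) * (2 / a) ^ n) * Real.exp (-(a / 2) * t) := by
  have hs : t ≤ Real.sinh t := (Real.self_le_sinh_iff).2 ht.le
  have hs0 : 0 ≤ Real.sinh t := ht.le.trans hs
  rw [abs_of_nonneg (by positivity)]
  have h1 := Real.pow_div_factorial_le_exp (a / 2 * Real.sinh t) (by positivity) n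
  have h2 : Real.exp (-x * Real.sinh t - ν * t) ≤
      Real.exp (-(a/2 * Real.sinh t)) * Real.exp (-(a / 2) * t) := by
    rw [← Real.exp_add, Real.exp_le_exp]
    nlinarith [mul_nonneg hν ht.le]
  have h3 : Real.sinh t ^ n ≤ ((n.factorial : ℝ) * (2 / a) ^ n) * Real.exp (a / 2 * Real.sinh t) := by
    rw [div_le_iff₀ (by positivity), mul_pow] at h1
    have : Real.sinh t ^ n = (2 / a) ^ n * ((a / 2) ^ n * Real.sinh t ^ n) := by
      rw [← mul_assoc, ← mul_pow, div_mul_div_cancel₀ ha.ne', div_self two_ne_zero, one_pow, one_mul]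
    rw [this]
    calc (2 / a) ^ n * ((a / 2) ^ n * Real.sinh t ^ n)
        ≤ (2 / a) ^ n * (Real.exp (a / 2 * Real.sinh t) * (n.factorial : ℝ)) := by gcongr
      _ = _ := by ring
  calc _ ≤ (((n.factorial : ℝ) * (2 / a) ^ n) * Real.exp (a / 2 * Real.sinh t)) *
        (Real.exp (-(a/2 * Real.sinh t)) * Real.exp (-(a / 2) * t)) := by gcongr
    _ = _ := by
      rw [Real.exp_neg]; field_simp

lemma bj_int (ν x : ℝ) (hx : 0 < x) (hν : 0 ≤ ν) (n : ℕ) :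
    IntegrableOn (fun t => Real.sinh t ^ n * Real.exp (-x * Real.sinh t - ν * t)) (Ioi 0) := by
  have := ((exp_neg_integrableOn_Ioi 0 (half_pos hx)).const_mul ((n.factorial : ℝ) * (2 / x) ^ n))
  refine Integrable.mono' this (Continuous.aestronglyMeasurable
    (by have := Real.continuous_sinh; fun_prop)) ?_
  filter_upwards [ae_restrict_mem measurableSet_Ioi] with t ht
  exact bj_dom x ν hx hν n le_rfl ht

lemma bj_dI (ν x : ℝ) (hx : 0 < x) (hν : 0 ≤ ν) (n : ℕ) : HasDerivAt
    (fun x => ∫ t in Ioi (0:ℝ), Real.sinh t ^ n * Real.exp (-x * Real.sinh t - ν * t))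
    (∫ t in Ioi (0:ℝ), -(Real.sinh t ^ (n+1) * Real.exp (-x * Real.sinh t - ν * t))) x := by
  have hc := Real.continuous_sinh
  refine (hasDerivAt_integral_of_dominated_loc_of_deriv_le
    (F := fun x t => Real.sinh t ^ n * Real.exp (-x * Real.sinh t - ν * t))
    (F' := fun x t => -(Real.sinh t ^ (n+1) * Real.exp (-x * Real.sinh t - ν * t)))
    (s := Set.Ioi (x/2)) (bound := fun t => (((n+1).factorial : ℝ) * (2 / (x/2)) ^ (n+1)) *
      Real.exp (-(x / 2 / 2) * t)) (Ioi_mem_nhds (by linarith)) ?_ ?_ ?_ ?_ ?_ ?_).2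
  · exact Filter.Eventually.of_forall fun y => (by fun_prop : Continuous _).aestronglyMeasurable
  · exact bj_int ν x hx hν n
  · exact (by fun_prop : Continuous _).aestronglyMeasurable
  · filter_upwards [ae_restrict_mem measurableSet_Ioi] with t ht y hy
    rw [norm_neg]
    exact bj_dom (x/2) ν (by positivity) hν (n+1) (le_of_lt hy) ht
  · exact ((exp_neg_integrableOn_Ioi 0 (half_pos (half_pos hx))).const_mul _)
  · refine Filter.Eventually.of_forall fun t y _ => ?_
    have := ((((hasDerivAt_id y).neg.mul_const (Real.sinh t)).sub_const (ν * t)).exp).const_mul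
      (Real.sinh t ^ n)
    refine this.congr_deriv ?_
    simp; try ring

lemma bj_L1 (ν x : ℝ) :
    x ^ 2 * (∫ θ in (0:ℝ)..π, -Real.sin θ ^ 2 * Real.cos (x * Real.sin θ - ν * θ)) +
    x * (∫ θ in (0:ℝ)..π, -Real.sin θ * Real.sin (x * Real.sin θ - ν * θ)) +
    (x ^ 2 - ν ^ 2) * (∫ θ in (0:ℝ)..π, Real.cos (x * Real.sin θ - ν * θ)) =
    (x - ν) * Real.sin (ν * π) := by
  have key : ∫ θ in (0:ℝ)..π, (x ^ 2 * (-Real.sin θ ^ 2 * Real.cos (x * Real.sin θ - ν * θ)) +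
      x * (-Real.sin θ * Real.sin (x * Real.sin θ - ν * θ)) +
      (x ^ 2 - ν ^ 2) * Real.cos (x * Real.sin θ - ν * θ)) =
      (x * Real.cos π + ν) * Real.sin (x * Real.sin π - ν * π) -
      (x * Real.cos 0 + ν) * Real.sin (x * Real.sin 0 - ν * 0) := by
    refine intervalIntegral.integral_eq_sub_of_hasDerivAt
      (f := fun θ => (x * Real.cos θ + ν) * Real.sin (x * Real.sin θ - ν * θ)) ?_ ?_
    · intro θ _
      have := (((Real.hasDerivAt_cos θ).const_mul x).add_const ν).mul
        ((((Real.hasDerivAt_sin θ).const_mul x).sub ((hasDerivAt_id θ).const_mul ν)).sin)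
      refine this.congr_deriv ?_
      have h := Real.sin_sq_add_cos_sq θ
      have h' : Real.sin θ ^ 2 = 1 - Real.cos θ ^ 2 := by linarith
      simp only [h', Pi.sub_apply, id]
      ring
    · exact (by fun_prop : Continuous _).intervalIntegrable _ _
  rw [intervalIntegral.integral_add, intervalIntegral.integral_add,
    intervalIntegral.integral_const_mul, intervalIntegral.integral_const_mul,
    intervalIntegral.integral_const_mul] at key
  · rw [key]; simp; ring
  all_goals exact (by fun_prop : Continuous _).intervalIntegrable _ _

lemma bj_L2 (ν x : ℝ) (hx : 0 < x) (hν : 0 ≤ ν) :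
    x ^ 2 * (∫ t in Ioi (0:ℝ), Real.sinh t ^ 2 * Real.exp (-x * Real.sinh t - ν * t)) +
    x * (∫ t in Ioi (0:ℝ), -(Real.sinh t ^ 1 * Real.exp (-x * Real.sinh t - ν * t))) +
    (x ^ 2 - ν ^ 2) * (∫ t in Ioi (0:ℝ), Real.sinh t ^ 0 * Real.exp (-x * Real.sinh t - ν * t)) =
    (x - ν) := by
  have hc := Real.continuous_sinh
  have hc' := Real.continuous_cosh
  have i0 := bj_int ν x hx hν 0
  have i1 := bj_int ν x hx hν 1
  have i2 := bj_int ν x hx hν 2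
  have key : ∫ t in Ioi (0:ℝ), (x ^ 2 * (Real.sinh t ^ 2 * Real.exp (-x * Real.sinh t - ν * t)) +
      x * (-(Real.sinh t ^ 1 * Real.exp (-x * Real.sinh t - ν * t))) +
      (x ^ 2 - ν ^ 2) * (Real.sinh t ^ 0 * Real.exp (-x * Real.sinh t - ν * t))) =
      0 - (-(x * Real.cosh 0 - ν) * Real.exp (-x * Real.sinh 0 - ν * 0)) := by
    refine integral_Ioi_of_hasDerivAt_of_tendsto
      (f := fun t => -(x * Real.cosh t - ν) * Real.exp (-x * Real.sinh t - ν * t)) ?_ ?_ ?_ ?_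
    · exact (by fun_prop : Continuous _).continuousWithinAt
    · intro t _
      have := (((Real.hasDerivAt_cosh t).const_mul x).sub_const ν).neg.mul
        ((((Real.hasDerivAt_sinh t).const_mul (-x)).sub ((hasDerivAt_id t).const_mul ν)).exp)
      refine this.congr_deriv ?_
      have h := Real.cosh_sq t
      have h' : Real.sinh t ^ 2 = Real.cosh t ^ 2 - 1 := by linarith
      simp only [h', Pi.sub_apply, id, Pi.neg_apply]
      ring
    · exact ((i2.const_mul _).add ((i1.neg).const_mul _)).add (i0.const_mul _)
    · have hb : ∀ᶠ t : ℝ in Filter.atTop,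
          ‖-(x * Real.cosh t - ν) * Real.exp (-x * Real.sinh t - ν * t)‖ ≤
          (x * (((1).factorial : ℝ) * (2 / x) ^ 1) + (x + ν) * (((0).factorial : ℝ) * (2 / x) ^ 0)) *
            Real.exp (-(x / 2) * t) := by
        filter_upwards [Filter.eventually_gt_atTop 0] with t ht
        have b1 := bj_dom x ν hx hν 1 le_rfl ht
        have b0 := bj_dom x ν hx hν 0 le_rfl ht
        have hs0 : 0 ≤ Real.sinh t := Real.sinh_nonneg_iff.2 ht.le
        have hch : Real.cosh t ≤ Real.sinh t + 1 := by
          have := Real.cosh_sub_sinh t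
          have : Real.exp (-t) ≤ 1 := Real.exp_le_one_iff.2 (by linarith)
          linarith
        have hch0 := Real.cosh_pos t
        rw [abs_of_nonneg (by positivity)] at b1 b0
        rw [Real.norm_eq_abs, abs_mul, abs_of_nonneg (Real.exp_pos _).le]
        have : |-(x * Real.cosh t - ν)| ≤ x * Real.sinh t ^ 1 + (x + ν) * Real.sinh t ^ 0 := by
          rw [abs_neg, abs_le]
          constructor <;> nlinarith [mul_nonneg hx.le hs0, mul_pos hx hch0]
        calc _ ≤ (x * Real.sinh t ^ 1 + (x + ν) * Real.sinh t ^ 0) *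
              Real.exp (-x * Real.sinh t - ν * t) := by gcongr
          _ = x * (Real.sinh t ^ 1 * Real.exp (-x * Real.sinh t - ν * t)) +
             (x + ν) * (Real.sinh t ^ 0 * Real.exp (-x * Real.sinh t - ν * t)) := by ring
          _ ≤ x * (((1).factorial : ℝ) * (2 / x) ^ 1 * Real.exp (-(x / 2) * t)) + (x + ν) *
              (((0).factorial : ℝ) * (2 / x) ^ 0 * Real.exp (-(x / 2) * t)) := by gcongr
          _ = _ := by ring
      refine squeeze_zero_norm' hb ?_
      suffices h : Filter.Tendsto (fun t : ℝ => Real.exp (-(x / 2) * t)) Filter.atTop (nhds 0) by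
        simpa only [mul_zero] using h.const_mul
          (x * (((1).factorial : ℝ) * (2 / x) ^ 1) + (x + ν) * (((0).factorial : ℝ) * (2 / x) ^ 0))
      refine Real.tendsto_exp_atBot.comp ?_
      exact Filter.tendsto_id.const_mul_atTop_of_neg (by linarith)
  rw [integral_add, integral_add, integral_const_mul, integral_const_mul,
    integral_const_mul] at key
  · rw [key]; simp
  · exact i2.const_mul _
  · exact (i1.neg).const_mul _
  · exact (i2.const_mul _).add ((i1.neg).const_mul _)
  · exact i0.const_mul _

/-- The Bessel equation. -/
lemma bj_ode (ν : ℝ) (hν : 0 ≤ ν) : ∃ y1 y2 : ℝ → ℝ, ∀ x, 0 < x →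
    HasDerivAt (besselJ ν) (y1 x) x ∧ HasDerivAt y1 (y2 x) x ∧
    x ^ 2 * y2 x + x * y1 x + (x ^ 2 - ν ^ 2) * besselJ ν x = 0 := by
  refine ⟨fun x => (1 / π) * (∫ θ in (0:ℝ)..π, -Real.sin θ * Real.sin (x * Real.sin θ - ν * θ)) +
    (Real.sin (ν * π) / π) * ∫ t in Ioi (0:ℝ), (Real.sinh t ^ 1 * Real.exp (-x * Real.sinh t - ν * t)),
    fun x => (1 / π) * (∫ θ in (0:ℝ)..π, -Real.sin θ ^ 2 * Real.cos (x * Real.sin θ - ν * θ)) +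
    (Real.sin (ν * π) / π) * ∫ t in Ioi (0:ℝ), -(Real.sinh t ^ 2 * Real.exp (-x * Real.sinh t - ν * t)),
    fun x hx => ⟨?_, ?_, ?_⟩⟩
  · have h := ((bj_d1 ν x).const_mul (1/π)).sub ((bj_dI ν x hx hν 0).const_mul (Real.sin (ν * π) / π))
    simp only [pow_zero, one_mul, zero_add] at h
    rw [integral_neg, mul_neg, sub_neg_eq_add] at h
    exact h
  · exact ((bj_d2 ν x).const_mul (1/π)).add ((bj_dI ν x hx hν 1).const_mul (Real.sin (ν * π) / π))
  · have h1 := bj_L1 ν x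
    have h2 := bj_L2 ν x hx hν
    simp only [besselJ]
    simp only [pow_zero, one_mul, integral_neg] at h2 ⊢
    linear_combination (1/π) * h1 - (Real.sin (ν * π) / π) * h2

lemma fr_tail {b : ℂ} (hb : 0 < b.re) {R T : ℝ} (hR : 0 < R) (hT : R ≤ T) :
    ‖∫ r in R..T, Complex.exp (-b * (r : ℂ) ^ 2)‖ ≤ 1 / (‖b‖ * R) := by
  have hb0 : b ≠ 0 := by rintro rfl; simp at hb
  have hnb : 0 < ‖b‖ := norm_pos_iff.2 hb0
  have hpos : ∀ r ∈ uIcc R T, 0 < r := fun r hr => by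
    rw [uIcc_of_le hT] at hr; exact hR.trans_le hr.1
  have hexp : ∀ r : ℝ, ‖Complex.exp (-b * (r : ℂ) ^ 2)‖ ≤ 1 := fun r => by
    rw [Complex.norm_exp]
    refine Real.exp_le_one_iff.2 ?_
    have : (-b * (r : ℂ) ^ 2).re = -b.re * r ^ 2 := by
      rw [← Complex.ofReal_pow, Complex.re_mul_ofReal]; simp
    rw [this]; nlinarith [sq_nonneg r]
  have hcE : Continuous fun r : ℝ => Complex.exp (-b * (r : ℂ) ^ 2) := by fun_prop
  have hcE2 : ContinuousOn (fun r : ℝ => Complex.exp (-b * (r : ℂ) ^ 2) / (2 * b * (r : ℂ) ^ 2))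
      (uIcc R T) := by
    refine ContinuousOn.div hcE.continuousOn (by fun_prop) fun r hr => ?_
    have : (r : ℂ) ≠ 0 := by exact_mod_cast (hpos r hr).ne'
    exact mul_ne_zero (mul_ne_zero two_ne_zero hb0) (pow_ne_zero 2 this)
  have key : ∫ r in R..T, (Complex.exp (-b * (r : ℂ) ^ 2) +
      Complex.exp (-b * (r : ℂ) ^ 2) / (2 * b * (r : ℂ) ^ 2)) =
      -Complex.exp (-b * (T : ℂ) ^ 2) / (2 * b * T) - -Complex.exp (-b * (R : ℂ) ^ 2) / (2 * b * R) := by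
    refine intervalIntegral.integral_eq_sub_of_hasDerivAt
      (f := fun r : ℝ => -Complex.exp (-b * (r : ℂ) ^ 2) / (2 * b * r)) ?_ ?_
    · intro r hr
      have hr0 : (r : ℂ) ≠ 0 := by exact_mod_cast (hpos r hr).ne'
      have h0 : HasDerivAt (fun r : ℝ => (r : ℂ)) 1 r := Complex.ofRealCLM.hasDerivAt
      have h1 := (((h0.pow 2).const_mul (-b)).cexp.neg).div (h0.const_mul (2 * b))
        (mul_ne_zero (mul_ne_zero two_ne_zero hb0) hr0)
      refine h1.congr_deriv ?_
      simp only [Pi.pow_apply, Pi.neg_apply]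
      field_simp
      ring
    · exact (hcE.continuousOn.add hcE2).intervalIntegrable
  rw [intervalIntegral.integral_add (hcE.intervalIntegrable _ _) hcE2.intervalIntegrable] at key
  have h2 : ‖∫ r in R..T, Complex.exp (-b * (r : ℂ) ^ 2) / (2 * b * (r : ℂ) ^ 2)‖ ≤
      ∫ r in R..T, (1 / (2 * ‖b‖)) * (1 / r ^ 2) := by
    refine intervalIntegral.norm_integral_le_of_norm_le hT ?_ ?_
    · refine Filter.Eventually.of_forall fun r hr => ?_
      have hr0 : 0 < r := hR.trans hr.1
      rw [norm_div, norm_mul, norm_mul, norm_pow, Complex.norm_real, Real.norm_of_nonneg hr0.le,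
        Complex.norm_two]
      rw [div_mul_div_comm, one_mul]
      gcongr
      exact hexp r
    · refine ContinuousOn.intervalIntegrable ?_
      refine ContinuousOn.mul continuousOn_const (ContinuousOn.div continuousOn_const (by fun_prop) ?_)
      intro r hr
      have := hpos r hr
      positivity
  have h3 : ∫ r in R..T, (1 / (2 * ‖b‖)) * (1 / r ^ 2) = (1 / (2 * ‖b‖)) * (-1 / T) - (1 / (2 * ‖b‖)) * (-1 / R) := by
    refine intervalIntegral.integral_eq_sub_of_hasDerivAt (f := fun r => (1 / (2 * ‖b‖)) * (-1 / r)) ?_ ?_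
    · intro r hr
      have := hpos r hr
      refine (((hasDerivAt_const r (-1:ℝ)).div (hasDerivAt_id r) this.ne').const_mul _).congr_deriv ?_
      simp
    · refine ContinuousOn.intervalIntegrable ?_
      refine ContinuousOn.mul continuousOn_const (ContinuousOn.div continuousOn_const (by fun_prop) ?_)
      intro r hr
      have := hpos r hr
      positivity
  rw [h3] at h2
  have hT0 : 0 < T := hR.trans_le hT
  have hbd : ∀ r : ℝ, 0 < r → ‖-Complex.exp (-b * (r : ℂ) ^ 2) / (2 * b * r)‖ ≤ 1 / (2 * ‖b‖) * (1 / r) := by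
    intro r hr
    rw [norm_div, norm_neg, norm_mul, norm_mul, Complex.norm_real, Real.norm_of_nonneg hr.le,
        Complex.norm_two, div_mul_div_comm, one_mul]
    gcongr
    exact hexp r
  have e : ∫ r in R..T, Complex.exp (-b * (r : ℂ) ^ 2) =
    (-Complex.exp (-b * (T : ℂ) ^ 2) / (2 * b * T) - -Complex.exp (-b * (R : ℂ) ^ 2) / (2 * b * R)) -
     ∫ r in R..T, Complex.exp (-b * (r : ℂ) ^ 2) / (2 * b * (r : ℂ) ^ 2) := by
    rw [← key]; ring
  rw [e]
  refine (norm_sub_le _ _).trans ?_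
  have := norm_sub_le (-Complex.exp (-b * (T : ℂ) ^ 2) / (2 * b * T)) (-Complex.exp (-b * (R : ℂ) ^ 2) / (2 * b * R))
  have h4 := hbd T hT0
  have h5 := hbd R hR
  have e2 : 1 / (‖b‖ * R) = 1 / (2 * ‖b‖) * (1 / T) + 1 / (2 * ‖b‖) * (1 / R) + ((1 / (2 * ‖b‖)) * (-1 / T) - (1 / (2 * ‖b‖)) * (-1 / R)) := by
    field_simp; ring
  rw [e2]
  linarith

lemma fr_b {b : ℂ} (hb : 0 < b.re) {R : ℝ} (hR : 0 < R) :
    ‖(∫ r in (0:ℝ)..R, Complex.exp (-b * (r : ℂ) ^ 2)) - (π / b) ^ (1 / 2 : ℂ) / 2‖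
      ≤ 1 / (‖b‖ * R) := by
  rw [← integral_gaussian_complex_Ioi hb]
  have hi : IntegrableOn (fun r : ℝ => Complex.exp (-b * (r : ℂ) ^ 2)) (Ioi 0) :=
    (integrable_cexp_neg_mul_sq hb).integrableOn
  have ht := intervalIntegral_tendsto_integral_Ioi 0 hi Filter.tendsto_id
  have ht2 := (tendsto_const_nhds (x := ∫ r in (0:ℝ)..R, Complex.exp (-b * (r : ℂ) ^ 2))).sub ht
  refine le_of_tendsto ht2.norm ?_
  filter_upwards [Filter.eventually_ge_atTop R] with T hT
  have hcE : Continuous fun r : ℝ => Complex.exp (-b * (r : ℂ) ^ 2) := by fun_prop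
  rw [id, norm_sub_rev, intervalIntegral.integral_interval_sub_left (hcE.intervalIntegrable _ _)
    (hcE.intervalIntegrable _ _)]
  exact fr_tail hb hR hT

lemma fr_I {R : ℝ} (hR : 0 < R) :
    ‖(∫ r in (0:ℝ)..R, Complex.exp (-Complex.I * (r : ℂ) ^ 2)) - (π / Complex.I) ^ (1 / 2 : ℂ) / 2‖
      ≤ 1 / R := by
  have h1 : Continuous fun δ : ℝ => ∫ r in (0:ℝ)..R, Complex.exp (-((δ:ℂ) + Complex.I) * (r : ℂ) ^ 2) :=
    intervalIntegral.continuous_parametric_intervalIntegral_of_continuous' (by fun_prop) _ _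
  have hs : (π / ((0:ℝ) + Complex.I) : ℂ) ∈ Complex.slitPlane := by
    right
    simp [Real.pi_ne_zero]
  have h2 : ContinuousAt (fun δ : ℝ => (π / ((δ:ℂ) + Complex.I)) ^ (1 / 2 : ℂ) / 2) 0 := by
    have h5 : ContinuousAt (fun δ : ℝ => ((π : ℂ) / ((δ:ℂ) + Complex.I))) 0 :=
      ContinuousAt.div continuousAt_const (by fun_prop) (by simp)
    exact (h5.cpow continuousAt_const hs).div_const _
  have h3 := (h1.continuousAt.sub h2).norm.tendsto
  have h4 := h3.mono_left (nhdsWithin_le_nhds (s := Ioi 0))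
  simp only [Complex.ofReal_zero, zero_add, Pi.sub_apply] at h4
  refine le_of_tendsto h4 ?_
  filter_upwards [self_mem_nhdsWithin] with δ hδ
  have hδ' : (0:ℝ) < δ := hδ
  refine (fr_b (b := (δ:ℂ) + Complex.I) (by simpa using hδ') hR).trans ?_
  have : 1 ≤ ‖(δ:ℂ) + Complex.I‖ := by
    have := Complex.abs_im_le_norm ((δ:ℂ) + Complex.I)
    simpa using this
  gcongr
  nlinarith

lemma fr_val : (π / Complex.I : ℂ) ^ (1 / 2 : ℂ) = (√π : ℂ) * Complex.exp (-(π / 4 : ℝ) * Complex.I) := by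
  have h0 : (π / Complex.I : ℂ) = (π : ℝ) * (-Complex.I) := by
    rw [div_eq_mul_inv, Complex.inv_I]
  have hl : Complex.log ((π : ℝ) * (-Complex.I)) = (Real.log π : ℝ) + (-(π / 2) * Complex.I) := by
    rw [Complex.log_ofReal_mul Real.pi_pos (by simp), Complex.log_neg_I]
  rw [h0, Complex.cpow_def_of_ne_zero (by simp [Real.pi_ne_zero]), hl]
  rw [Real.sqrt_eq_rpow, Complex.ofReal_cpow Real.pi_pos.le, Complex.cpow_def_of_ne_zero
    (by simp [Real.pi_ne_zero]), ← Complex.exp_add, ← Complex.ofReal_log Real.pi_pos.le]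
  congr 1
  push_cast
  ring

lemma fr_cos (β : ℝ) {R : ℝ} (hR : 0 < R) :
    |(∫ r in (0:ℝ)..R, Real.cos (β - r ^ 2)) - √π / 2 * Real.cos (β - π / 4)| ≤ 1 / R := by
  have h := fr_I hR
  have h1 : ‖Complex.exp (β * Complex.I) * ((∫ r in (0:ℝ)..R, Complex.exp (-Complex.I * (r : ℂ) ^ 2)) - (π / Complex.I) ^ (1 / 2 : ℂ) / 2)‖ ≤ 1 / R := by
    rw [norm_mul, Complex.norm_exp_ofReal_mul_I, one_mul]; exact h
  refine le_trans ?_ ((Complex.abs_re_le_norm _).trans h1)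
  apply le_of_eq
  congr 1
  rw [mul_sub, Complex.sub_re, fr_val, ← intervalIntegral.integral_const_mul]
  congr 1
  · have hi : IntervalIntegrable (fun r : ℝ => Complex.exp (β * Complex.I) * Complex.exp (-Complex.I * (r : ℂ) ^ 2)) volume 0 R := (by fun_prop : Continuous _).intervalIntegrable _ _
    have := Complex.reCLM.intervalIntegral_comp_comm hi
    simp only [Complex.reCLM_apply] at this
    rw [← this]
    refine intervalIntegral.integral_congr fun r _ => ?_
    rw [← Complex.exp_add, ← Complex.exp_ofReal_mul_I_re]
    congr 2
    push_cast; ring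
  · rw [← Complex.exp_ofReal_mul_I_re, ← Complex.re_ofReal_mul]
    congr 1
    have : ((β - π / 4 : ℝ) : ℂ) * Complex.I = β * Complex.I + -(π / 4 : ℝ) * Complex.I := by
      push_cast; ring
    rw [this, Complex.exp_add]
    push_cast; ring

lemma main_sub (α x : ℝ) (hx : 0 < x) :
    ∫ u in (0:ℝ)..(π/2), Real.cos (x * Real.cos u - α) * Real.cos (u / 2) =
     √2 / √x * ∫ r in (0:ℝ)..√x, Real.cos ((x - α) - r ^ 2) := by
  have h := intervalIntegral.integral_comp_mul_deriv (a := 0) (b := π / 2)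
    (f := fun u => √(2 * x) * Real.sin (u / 2)) (f' := fun u => √(2 * x) * (Real.cos (u / 2) * (1 / 2)))
    (g := fun r => Real.cos ((x - α) - r ^ 2)) ?_ (by fun_prop) (by fun_prop)
  · have e2 : √(2 * x) * Real.sin (π / 2 / 2) = √x := by
      rw [show π / 2 / 2 = π / 4 by ring, Real.sin_pi_div_four, Real.sqrt_mul (by norm_num)]
      have := Real.mul_self_sqrt (show (0:ℝ) ≤ 2 by norm_num)
      linear_combination (√x / 2) * this
    simp only [zero_div, Real.sin_zero, mul_zero] at h
    rw [e2] at h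
    rw [← h, ← intervalIntegral.integral_const_mul]
    refine intervalIntegral.integral_congr fun u _ => ?_
    simp only [Function.comp]
    have e3 : (x - α) - (√(2 * x) * Real.sin (u / 2)) ^ 2 = x * Real.cos u - α := by
      rw [mul_pow, Real.sq_sqrt (by positivity)]
      have : Real.cos u = 1 - 2 * Real.sin (u/2) ^ 2 := by
        have := Real.cos_two_mul (u/2)
        have h2 := Real.sin_sq_add_cos_sq (u/2)
        rw [show 2 * (u/2) = u by ring] at this
        linarith
      rw [this]; ring
    rw [e3, Real.sqrt_mul (by norm_num)]
    have hsx : √x ≠ 0 := (Real.sqrt_pos.2 hx).ne'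
    have := Real.mul_self_sqrt (show (0:ℝ) ≤ 2 by norm_num)
    field_simp
    linear_combination (-1) * Real.cos (x * Real.cos u - α) * Real.cos (u / 2) * this
  · intro u _
    have := (((hasDerivAt_id u).div_const 2).sin).const_mul (√(2 * x))
    exact this

lemma main_rest (ν α : ℝ) : ∃ C : ℝ, 0 ≤ C ∧ ∀ x : ℝ, 1 ≤ x →
    |∫ u in (0:ℝ)..(π/2), Real.cos (x * Real.cos u - α) * (Real.cos (ν * u) - Real.cos (u / 2))|
     ≤ C / x := by
  set K : ℝ := ν ^ 2 + 1 with hK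
  have hK0 : 0 < K := by positivity
  have hpi := Real.pi_lt_d2
  have hpi3 := Real.pi_gt_three
  set D : ℝ → ℝ := fun u => Real.cos (ν * u) - Real.cos (u / 2) with hD
  set D' : ℝ → ℝ := fun u => -Real.sin (ν * u) * ν + Real.sin (u / 2) * (1/2) with hD'
  have hDd : ∀ u, HasDerivAt D (D' u) u := fun u => by
    have := (((hasDerivAt_id u).const_mul ν).cos).sub (((hasDerivAt_id u).div_const 2).cos)
    refine this.congr_deriv ?_
    simp [hD']
  have hDb : ∀ u, 0 ≤ u → |D u| ≤ K * u ^ 2 := fun u hu => by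
    have a1 := Real.one_sub_sq_div_two_le_cos (x := ν * u)
    have a2 := Real.one_sub_sq_div_two_le_cos (x := u / 2)
    have a3 := Real.cos_le_one (ν * u)
    have a4 := Real.cos_le_one (u/2)
    simp only [hD, hK]
    rw [abs_le]
    constructor <;> nlinarith [sq_nonneg (ν * u), sq_nonneg u]
  have hDb' : ∀ u, 0 ≤ u → |D' u| ≤ K * u := fun u hu => by
    have a1 : |Real.sin (ν * u)| ≤ |ν * u| := Real.abs_sin_le_abs
    have a2 : |Real.sin (u / 2)| ≤ |u / 2| := Real.abs_sin_le_abs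
    calc |D' u| ≤ |-Real.sin (ν * u) * ν| + |Real.sin (u / 2) * (1/2)| := abs_add_le _ _
      _ = |Real.sin (ν * u)| * |ν| + |Real.sin (u/2)| * (1/2) := by
        rw [abs_mul, abs_mul, abs_neg, abs_of_nonneg (show (0:ℝ) ≤ 1/2 by norm_num)]
      _ ≤ |ν * u| * |ν| + |u / 2| * (1/2) := by gcongr
      _ = ν ^ 2 * u + u / 4 := by
        rw [abs_mul, abs_of_nonneg hu, abs_of_nonneg (show 0 ≤ u / 2 by linarith), ← sq_abs ν]; ring
      _ ≤ _ := by simp only [hK]; linarith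
  refine ⟨14 * K + 2, by positivity, fun x hx => ?_⟩
  have hx0 : 0 < x := by linarith
  set Φ : ℝ → ℝ := fun u => x * Real.cos u - α with hΦ
  set h : ℝ → ℝ := fun u => -(1 / x) * (Real.sin (Φ u) * (D u / Real.sin u)) with hh
  set f : ℝ → ℝ := fun u => Real.cos (Φ u) * D u with hf
  have hfc : Continuous f := by simp only [hf, hΦ, hD]; fun_prop
  have hR : ∀ u, 0 < u → u ≤ π / 2 → 2 / π * u ≤ Real.sin u := fun u h0 h1 =>
    Real.mul_le_sin h0.le h1
  have hsin : ∀ u, 0 < u → u ≤ π / 2 → u ≤ 1.575 * Real.sin u := fun u h0 h1 => by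
    have := hR u h0 h1
    rw [div_mul_eq_mul_div, div_le_iff₀ Real.pi_pos] at this
    have : 0 < Real.sin u := Real.sin_pos_of_pos_of_lt_pi h0 (by linarith)
    nlinarith
  have hhb : ∀ u, 0 < u → u ≤ π / 2 → |h u| ≤ 3 * K / x := fun u h0 h1 => by
    have hs : 0 < Real.sin u := Real.sin_pos_of_pos_of_lt_pi h0 (by linarith)
    have := hsin u h0 h1
    have hb := hDb u h0.le
    simp only [hh]
    rw [abs_mul, abs_mul, abs_neg, abs_of_pos (show 0 < 1 / x by positivity), abs_div, abs_of_pos hs]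
    have : |D u| / Real.sin u ≤ 3 * K := by
      rw [div_le_iff₀ hs]
      refine hb.trans ?_
      have : u ^ 2 ≤ 3 * Real.sin u := by nlinarith
      nlinarith
    calc 1 / x * (|Real.sin (Φ u)| * (|D u| / Real.sin u)) ≤ 1 / x * (1 * (3 * K)) := by
          gcongr; exact Real.abs_sin_le_one _
      _ = _ := by ring
  set ε := 1 / x with hε
  have hε0 : 0 < ε := by positivity
  have hε1 : ε ≤ 1 := by rw [hε, div_le_one hx0]; exact hx
  set G : ℝ → ℝ := fun e => (∫ u in (0:ℝ)..e, f u) - h e with hG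
  have hGd : ∀ u ∈ Icc ε (π/2), HasDerivWithinAt G
      ((1 / x) * (Real.sin (Φ u) * ((D' u * Real.sin u - D u * Real.cos u) / Real.sin u ^ 2)))
      (Icc ε (π/2)) u := by
    intro u hu
    have hu0 : 0 < u := hε0.trans_le hu.1
    have hs : 0 < Real.sin u := Real.sin_pos_of_pos_of_lt_pi hu0 (by linarith [hu.2])
    have i1 : HasDerivAt (fun e => ∫ u in (0:ℝ)..e, f u) (f u) u :=
      intervalIntegral.integral_hasDerivAt_right (hfc.intervalIntegrable _ _)
        (hfc.stronglyMeasurableAtFilter _ _) hfc.continuousAt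
    have i2 : HasDerivAt Φ (x * -Real.sin u) u := ((Real.hasDerivAt_cos u).const_mul x).sub_const α
    have i3 := (i2.sin.mul ((hDd u).div (Real.hasDerivAt_sin u) hs.ne')).const_mul (-(1/x))
    refine ((i1.sub i3).congr_deriv ?_).hasDerivWithinAt
    simp only [hf]
    simp only [Pi.div_apply]
    field_simp
    ring
  have hGb : ∀ u ∈ Icc ε (π/2), ‖(1 / x) * (Real.sin (Φ u) * ((D' u * Real.sin u - D u * Real.cos u) / Real.sin u ^ 2))‖ ≤ 5 * K / x := by
    intro u hu
    have hu0 : 0 < u := hε0.trans_le hu.1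
    have hs : 0 < Real.sin u := Real.sin_pos_of_pos_of_lt_pi hu0 (by linarith [hu.2])
    have h1 := hsin u hu0 hu.2
    have h2 : |D' u * Real.sin u - D u * Real.cos u| ≤ 2 * K * u ^ 2 := by
      calc _ ≤ |D' u * Real.sin u| + |D u * Real.cos u| := abs_sub _ _
        _ = |D' u| * Real.sin u + |D u| * |Real.cos u| := by rw [abs_mul, abs_mul, abs_of_pos hs]
        _ ≤ (K * u) * u + (K * u ^ 2) * 1 := by
          gcongr
          · exact hDb' u hu0.le
          · exact Real.sin_le hu0.le
          · exact hDb u hu0.le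
          · exact Real.abs_cos_le_one _
        _ = _ := by ring
    have h3 : |D' u * Real.sin u - D u * Real.cos u| / Real.sin u ^ 2 ≤ 5 * K := by
      rw [div_le_iff₀ (by positivity)]
      refine h2.trans ?_
      have : u ^ 2 ≤ 2.5 * Real.sin u ^ 2 := by nlinarith
      nlinarith
    rw [Real.norm_eq_abs, abs_mul, abs_mul, abs_of_pos (show 0 < 1 / x by positivity), abs_div, abs_of_pos (show 0 < Real.sin u ^ 2 by positivity)]
    calc _ ≤ 1 / x * (1 * (5 * K)) := by
          gcongr; exact Real.abs_sin_le_one _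
      _ = _ := by ring
  have hle : ε ≤ π / 2 := by linarith
  have hm := Convex.norm_image_sub_le_of_norm_hasDerivWithin_le hGd hGb (convex_Icc _ _)
    (left_mem_Icc.2 hle) (right_mem_Icc.2 hle)
  have hi : ‖∫ u in (0:ℝ)..ε, f u‖ ≤ 2 * |ε - 0| := by
    refine intervalIntegral.norm_integral_le_of_norm_le_const fun u _ => ?_
    simp only [hf, hD]
    rw [Real.norm_eq_abs, abs_mul]
    have a1 := Real.abs_cos_le_one (Φ u)
    have a2 := abs_sub (Real.cos (ν * u)) (Real.cos (u / 2))
    have a3 := Real.abs_cos_le_one (ν * u)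
    have a4 := Real.abs_cos_le_one (u / 2)
    nlinarith [abs_nonneg (Real.cos (Φ u)), abs_nonneg (Real.cos (ν * u) - Real.cos (u / 2))]
  rw [sub_zero, abs_of_pos hε0, Real.norm_eq_abs] at hi
  rw [Real.norm_eq_abs, Real.norm_eq_abs, abs_of_nonneg (show 0 ≤ π/2 - ε by linarith)] at hm
  have hm2 : 5 * K / x * (π / 2 - ε) ≤ 8 * K / x := by
    calc 5 * K / x * (π / 2 - ε) ≤ 5 * K / x * 1.6 := by
          gcongr; linarith
      _ = _ := by ring
  have b1 := hhb ε hε0 hle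
  have b2 := hhb (π/2) (by positivity) le_rfl
  have e : (14 * K + 2) / x = 8 * K / x + 3 * K / x + 3 * K / x + 2 * ε := by
    rw [hε]; ring
  rw [e]
  simp only [hG] at hm
  change |∫ u in (0:ℝ)..(π/2), f u| ≤ _
  rw [abs_le] at *
  constructor <;> linarith [hm.1, hm.2]

lemma I1_symm (ν x : ℝ) : ∫ θ in (0:ℝ)..π, Real.cos (x * Real.sin θ - ν * θ) =
    2 * ∫ u in (0:ℝ)..(π/2), Real.cos (x * Real.cos u - ν * π / 2) * Real.cos (ν * u) := by
  set f : ℝ → ℝ := fun u => Real.cos (x * Real.cos u - ν * π / 2 - ν * u) with hf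
  have hfc : Continuous f := by simp only [hf]; fun_prop
  have h1 : ∫ θ in (0:ℝ)..π, Real.cos (x * Real.sin θ - ν * θ) = ∫ θ in (0:ℝ)..π, f (θ - π / 2) := by
    refine intervalIntegral.integral_congr fun θ _ => ?_
    simp only [hf]
    rw [Real.cos_sub_pi_div_two]
    congr 1; ring
  rw [h1, intervalIntegral.integral_comp_sub_right f]
  rw [← intervalIntegral.integral_add_adjacent_intervals (b := 0) (hfc.intervalIntegrable _ _) (hfc.intervalIntegrable _ _)]
  have h2 : ∫ u in (0 - π/2)..0, f u = ∫ u in (0:ℝ)..(π/2), f (-u) := by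
    rw [intervalIntegral.integral_comp_neg]; simp
  rw [h2, show π - π / 2 = π / 2 by ring, ← intervalIntegral.integral_add ((by fun_prop : Continuous fun u => f (-u)).intervalIntegrable _ _)
    (hfc.intervalIntegrable _ _), ← intervalIntegral.integral_const_mul]
  refine intervalIntegral.integral_congr fun u _ => ?_
  simp only [hf, Real.cos_neg]
  rw [show x * Real.cos u - ν * π / 2 - ν * -u = (x * Real.cos u - ν * π / 2) + ν * u by ring,
    Real.cos_add, Real.cos_sub (x * Real.cos u - ν * π / 2) (ν * u)]
  ring

lemma I2_bd (ν x : ℝ) (hx : 0 < x) (hν : 0 ≤ ν) :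
    |∫ t in Set.Ioi (0:ℝ), Real.exp (-x * Real.sinh t - ν * t)| ≤ 1 / x := by
  have hi := exp_neg_integrableOn_Ioi 0 hx
  have h : ‖∫ t in Set.Ioi (0:ℝ), Real.exp (-x * Real.sinh t - ν * t)‖ ≤
      ∫ t in Ioi (0:ℝ), Real.exp (-x * t) := by
    refine norm_integral_le_of_norm_le hi ?_
    filter_upwards [ae_restrict_mem measurableSet_Ioi] with t ht
    have ht' : 0 < t := ht
    rw [Real.norm_eq_abs, abs_of_pos (Real.exp_pos _), Real.exp_le_exp]
    have hs : t ≤ Real.sinh t := (Real.self_le_sinh_iff).2 ht'.le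
    nlinarith [mul_nonneg hν ht'.le]
  rw [integral_exp_mul_Ioi (by linarith)] at h
  simpa using h

lemma bj_asymp (ν : ℝ) (hν : 0 ≤ ν) : ∃ C : ℝ, ∀ x : ℝ, 1 ≤ x →
    |√(π / 2) * √x * besselJ ν x - Real.cos (x - ν * π / 2 - π / 4)| ≤ C / √x := by
  obtain ⟨C, hC0, hC⟩ := main_rest ν (ν * π / 2)
  refine ⟨√(π/2) * (2 / π * C + 2 / π * √2 + 1 / π), fun x hx => ?_⟩
  have hx0 : 0 < x := by linarith
  have hsx : 0 < √x := Real.sqrt_pos.2 hx0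
  have hxx : √x * √x = x := Real.mul_self_sqrt hx0.le
  have h1 := hC x hx
  have h2 := fr_cos (x - ν * π / 2) hsx
  have h3 := I2_bd ν x hx0 hν
  have h4 := main_sub (ν * π / 2) x hx0
  have hsplit : ∫ u in (0:ℝ)..(π/2), Real.cos (x * Real.cos u - ν * π / 2) * Real.cos (ν * u) =
    (∫ u in (0:ℝ)..(π/2), Real.cos (x * Real.cos u - ν * π / 2) * (Real.cos (ν * u) - Real.cos (u / 2))) +
    ∫ u in (0:ℝ)..(π/2), Real.cos (x * Real.cos u - ν * π / 2) * Real.cos (u / 2) := by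
    rw [← intervalIntegral.integral_add ((by fun_prop : Continuous _).intervalIntegrable _ _)
      ((by fun_prop : Continuous _).intervalIntegrable _ _)]
    refine intervalIntegral.integral_congr fun u _ => ?_
    ring
  rw [besselJ, I1_symm, hsplit, h4]
  set A := ∫ u in (0:ℝ)..(π/2), Real.cos (x * Real.cos u - ν * π / 2) * (Real.cos (ν * u) - Real.cos (u / 2))
  set B := ∫ r in (0:ℝ)..√x, Real.cos ((x - ν * π / 2) - r ^ 2)
  set E := ∫ t in Set.Ioi (0:ℝ), Real.exp (-x * Real.sinh t - ν * t)
  set c := Real.cos (x - ν * π / 2 - π / 4)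
  have hc1 : √(π/2) * (2 / π) * √2 * (√π / 2) = 1 := by
    rw [Real.sqrt_div Real.pi_pos.le]
    have := Real.mul_self_sqrt Real.pi_pos.le
    have hp := Real.pi_pos
    field_simp
    linarith
  have e : √(π / 2) * √x * (1 / π * (2 * (A + √2 / √x * B)) - Real.sin (ν * π) / π * E) - c =
     √(π/2) * (2 / π * (√x * A) + 2 / π * √2 * (B - √π / 2 * c) - 1 / π * (Real.sin (ν * π) * (√x * E))) := by
    have : √x * (√2 / √x * B) = √2 * B := by field_simp
    linear_combination (√(π / 2) * (2 / π)) * this + c * hc1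
  rw [e, abs_mul, abs_of_nonneg (Real.sqrt_nonneg _), mul_div_assoc]
  refine mul_le_mul_of_nonneg_left ?_ (Real.sqrt_nonneg _)
  have hp := Real.pi_pos
  have hr : √x / x = 1 / √x := by
    rw [div_eq_div_iff hx0.ne' hsx.ne']; linarith
  have hA : |√x * A| ≤ C / √x := by
    rw [abs_mul, abs_of_pos hsx]
    calc √x * |A| ≤ √x * (C / x) := by gcongr
      _ = C * (√x / x) := by ring
      _ = _ := by rw [hr]; ring
  have hE : |Real.sin (ν * π) * (√x * E)| ≤ 1 / √x := by
    rw [abs_mul, abs_mul, abs_of_pos hsx]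
    calc _ ≤ 1 * (√x * (1 / x)) := by gcongr; exact Real.abs_sin_le_one _
      _ = √x / x := by ring
      _ = _ := hr
  calc _ ≤ |2 / π * (√x * A)| + |2 / π * √2 * (B - √π / 2 * c)| + |1 / π * (Real.sin (ν * π) * (√x * E))| :=
        (abs_sub _ _).trans (by gcongr; exact abs_add_le _ _)
    _ = 2 / π * |√x * A| + 2 / π * √2 * |B - √π / 2 * c| + 1 / π * |Real.sin (ν * π) * (√x * E)| := by
        rw [abs_mul (2/π), abs_mul (2 / π * √2), abs_mul (1/π), abs_of_pos (show 0 < 2/π by positivity),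
          abs_of_pos (show 0 < 2/π * √2 by positivity), abs_of_pos (show 0 < 1/π by positivity)]
    _ ≤ 2 / π * (C / √x) + 2 / π * √2 * (1 / √x) + 1 / π * (1 / √x) := by gcongr
    _ = _ := by ring

/-- The phase. -/
noncomputable def ph (ν x : ℝ) : ℝ := √(x ^ 2 - ν ^ 2) - ν * Real.arccos (ν / x)

/-- Fourth root of `x² - ν²`. -/
noncomputable def pp (ν x : ℝ) : ℝ := (x ^ 2 - ν ^ 2) ^ ((1 : ℝ) / 4)

lemma q_pos {ν x : ℝ} (hν : 0 < ν) (hx : ν < x) : 0 < x ^ 2 - ν ^ 2 := by nlinarith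

lemma pp_pos {ν x : ℝ} (hν : 0 < ν) (hx : ν < x) : 0 < pp ν x :=
  Real.rpow_pos_of_pos (q_pos hν hx) _

lemma pp_four {ν x : ℝ} (hν : 0 < ν) (hx : ν < x) : pp ν x ^ 4 = x ^ 2 - ν ^ 2 := by
  rw [pp, ← Real.rpow_natCast, ← Real.rpow_mul (q_pos hν hx).le]; norm_num

lemma pp_two {ν x : ℝ} (hν : 0 < ν) (hx : ν < x) : √(x ^ 2 - ν ^ 2) = pp ν x ^ 2 := by
  rw [← pp_four hν hx, show pp ν x ^ 4 = (pp ν x ^ 2) ^ 2 by ring, Real.sqrt_sq (by positivity)]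

lemma pp_deriv {ν x : ℝ} (hν : 0 < ν) (hx : ν < x) :
    HasDerivAt (pp ν) (x / (2 * pp ν x ^ 3)) x := by
  have hq := q_pos hν hx
  have hp := pp_pos hν hx
  have h1 : HasDerivAt (fun x : ℝ => x ^ 2 - ν ^ 2) (2 * x) x := by
    simpa using ((hasDerivAt_id x).pow 2).sub_const (ν ^ 2)
  refine (h1.rpow_const (p := (1:ℝ)/4) (Or.inl hq.ne')).congr_deriv ?_
  have : (x ^ 2 - ν ^ 2) ^ ((1:ℝ)/4 - 1) = 1 / pp ν x ^ 3 := by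
    rw [pp, ← Real.rpow_natCast (_ ^ ((1:ℝ)/4)) 3, ← Real.rpow_mul hq.le, one_div (_ ^ (_ : ℝ)), ← Real.rpow_neg hq.le]
    norm_num
  rw [this]; field_simp; ring

lemma sqrt_ratio {ν x : ℝ} (hν : 0 < ν) (hx : ν < x) :
    √(1 - (ν / x) ^ 2) = pp ν x ^ 2 / x := by
  have hx0 : 0 < x := hν.trans hx
  have hp := pp_pos hν hx
  have h4 := pp_four hν hx
  have : 1 - (ν / x) ^ 2 = (pp ν x ^ 2 / x) ^ 2 := by
    field_simp; linear_combination -h4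
  rw [this, Real.sqrt_sq (by positivity)]

lemma ph_deriv {ν x : ℝ} (hν : 0 < ν) (hx : ν < x) :
    HasDerivAt (ph ν) (pp ν x ^ 2 / x) x := by
  have hq := q_pos hν hx
  have hp := pp_pos hν hx
  have hx0 : 0 < x := hν.trans hx
  have h1 : HasDerivAt (fun x : ℝ => x ^ 2 - ν ^ 2) (2 * x) x := by
    simpa using ((hasDerivAt_id x).pow 2).sub_const (ν ^ 2)
  have h2 : HasDerivAt (fun x : ℝ => ν / x) (-ν / x ^ 2) x := by
    refine ((hasDerivAt_const x ν).div (hasDerivAt_id x) hx0.ne').congr_deriv ?_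
    simp
  have hlt : ν / x < 1 := (div_lt_one hx0).2 hx
  have hpos : 0 < ν / x := by positivity
  have h3 := ((Real.hasDerivAt_arccos (by linarith) hlt.ne).comp x h2).const_mul ν
  refine ((h1.sqrt hq.ne').sub h3).congr_deriv ?_
  have e : √(1 - (ν / x) ^ 2) = pp ν x ^ 2 / x := sqrt_ratio hν hx
  rw [e, pp_two hν hx]
  have h4 := pp_four hν hx
  field_simp
  linear_combination -h4

lemma arctan_lower {u : ℝ} (hu : 0 ≤ u) : u - u ^ 3 / 3 ≤ Real.arctan u := by
  have hd : ∀ v : ℝ, HasDerivAt (fun v => Real.arctan v - (v - v ^ 3 / 3)) (v ^ 4 / (1 + v ^ 2)) v := by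
    intro v
    refine ((Real.hasDerivAt_arctan v).sub ((hasDerivAt_id v).sub
      (((hasDerivAt_id v).pow 3).div_const 3))).congr_deriv ?_
    have : 1 + v ^ 2 ≠ 0 := by positivity
    simp
    field_simp
    ring
  have hm : Monotone (fun v => Real.arctan v - (v - v ^ 3 / 3)) := by
    refine monotone_of_deriv_nonneg (fun v => (hd v).differentiableAt) fun v => ?_
    rw [(hd v).deriv]; positivity
  have := hm hu
  simp at this
  linarith

lemma ph_le {ν x : ℝ} (hν : 0 < ν) (hx : ν < x) : ph ν x ≤ pp ν x ^ 2 := by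
  rw [ph, pp_two hν hx]
  have := Real.arccos_nonneg (ν / x)
  nlinarith

lemma ph_le' {ν x : ℝ} (hν : 0 < ν) (hx : ν < x) : ph ν x * ν ^ 2 ≤ pp ν x ^ 6 / 3 := by
  have hx0 : 0 < x := hν.trans hx
  have hq := q_pos hν hx
  have hp := pp_pos hν hx
  have e : √(1 - (ν / x) ^ 2) = pp ν x ^ 2 / x := sqrt_ratio hν hx
  rw [ph, pp_two hν hx, Real.arccos_eq_arctan (by positivity), e]
  have e2 : pp ν x ^ 2 / x / (ν / x) = pp ν x ^ 2 / ν := by field_simp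
  rw [e2]
  have := arctan_lower (u := pp ν x ^ 2 / ν) (by positivity)
  calc (pp ν x ^ 2 - ν * Real.arctan (pp ν x ^ 2 / ν)) * ν ^ 2 ≤
      (pp ν x ^ 2 - ν * (pp ν x ^ 2 / ν - (pp ν x ^ 2 / ν) ^ 3 / 3)) * ν ^ 2 := by gcongr
    _ = _ := by field_simp; ring

/-- Error control function. -/
noncomputable def HH (ν x : ℝ) : ℝ := 9 / 4 / pp ν x ^ 2 + 5 / 12 * ν ^ 2 / pp ν x ^ 6

lemma HH_nonneg {ν x : ℝ} (hν : 0 < ν) (hx : ν < x) : 0 ≤ HH ν x := by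
  have hp := pp_pos hν hx
  rw [HH]; positivity

lemma HH_le {ν x : ℝ} (hν : 0 < ν) (hx : ν < x) (hph : 0 < ph ν x) :
    HH ν x ≤ 12 / 5 / ph ν x := by
  have hp := pp_pos hν hx
  have h1 := ph_le hν hx
  have h2 := ph_le' hν hx
  have a1 : 9 / 4 / pp ν x ^ 2 ≤ 9 / 4 / ph ν x := by gcongr
  have a2 : 5 / 12 * ν ^ 2 / pp ν x ^ 6 ≤ 5 / 36 / ph ν x := by
    rw [div_le_div_iff₀ (by positivity) hph]; nlinarith
  have a3 : 12 / 5 / ph ν x = 9 / 4 / ph ν x + 5 / 36 / ph ν x + (1/90) / ph ν x := by ring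
  have a4 : 0 < (1/90) / ph ν x := by positivity
  rw [HH, a3]; linarith

lemma HH_deriv {ν x : ℝ} (hν : 0 < ν) (hx : ν < x) :
    HasDerivAt (HH ν) (-(9 / 4 * x / pp ν x ^ 6 + 5 / 4 * ν ^ 2 * x / pp ν x ^ 10)) x := by
  have hp := pp_pos hν hx
  have hd := pp_deriv hν hx
  refine (((hasDerivAt_const x (9/4:ℝ)).div (hd.pow 2) (by simp only [Pi.pow_apply]; positivity)).add
    ((hasDerivAt_const x (5 / 12 * ν ^ 2)).div (hd.pow 6) (by simp only [Pi.pow_apply]; positivity))).congr_deriv ?_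
  simp only [Pi.pow_apply]
  field_simp
  ring

/-- Normalized Bessel function. -/
noncomputable def WW (ν x : ℝ) : ℝ := √(π / 2) * pp ν x * besselJ ν x

/-- Comparison along a full number of periods. -/
lemma WW_compare {ν a b M : ℝ} (hν : 0 < ν) (ha : ν < a) (hab : a ≤ b) (hM0 : 0 ≤ M)
    (hM : ∀ x, a ≤ x → |WW ν x| ≤ M) (n : ℕ) (hn : ph ν b = ph ν a + n * (2 * π)) :
    |WW ν b - WW ν a| ≤ M * HH ν a := by
  obtain ⟨y1, y2, hy⟩ := bj_ode ν hν.le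
  set k := √(π / 2) with hk
  set F : ℝ → ℝ := fun x => k * ((pp ν x * besselJ ν x) * Real.cos (ph ν x - ph ν a) -
    (x ^ 2 * besselJ ν x / (2 * pp ν x ^ 5) + x * y1 x / pp ν x) * Real.sin (ph ν x - ph ν a)) with hF
  set F' : ℝ → ℝ := fun x => -Real.sin (ph ν x - ph ν a) * WW ν x *
    (x / pp ν x ^ 6 - 5 / 4 * x ^ 3 / pp ν x ^ 10) with hF'
  have hFd : ∀ x, a ≤ x → HasDerivAt F (F' x) x := by
    intro x hax
    have hx : ν < x := ha.trans_le hax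
    have hx0 : 0 < x := hν.trans hx
    have hp := pp_pos hν hx
    have hp4 := pp_four hν hx
    obtain ⟨d1, d2, ode⟩ := hy x hx0
    have dp := pp_deriv hν hx
    have dφ := (ph_deriv hν hx).sub_const (ph ν a)
    have t1 := (dp.mul d1).mul dφ.cos
    have t2 := ((((hasDerivAt_id x).pow 2).mul d1).div ((dp.pow 5).const_mul 2)
      (by simp only [Pi.pow_apply]; positivity)).add (((hasDerivAt_id x).mul d2).div dp hp.ne')
    have t3 := (t1.sub (t2.mul dφ.sin)).const_mul k
    refine t3.congr_deriv ?_
    simp only [hF', WW, Pi.pow_apply, Pi.mul_apply, Pi.div_apply, Pi.add_apply, id]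
    rw [← hp4] at ode
    have hy2 : y2 x = -(x * y1 x + pp ν x ^ 4 * besselJ ν x) / x ^ 2 := by
      field_simp; linear_combination ode
    rw [hy2]
    generalize pp ν x = p at *
    generalize besselJ ν x = y at *
    generalize y1 x = z at *
    generalize Real.sin (ph ν x - ph ν a) = s at *
    generalize Real.cos (ph ν x - ph ν a) = c at *
    field_simp
    ring
  have hB : ∀ x, a ≤ x → HasDerivAt (fun x => M * (HH ν a - HH ν x))
      (M * (9 / 4 * x / pp ν x ^ 6 + 5 / 4 * ν ^ 2 * x / pp ν x ^ 10)) x := by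
    intro x hax
    have hx : ν < x := ha.trans_le hax
    refine (((HH_deriv hν hx).const_sub (HH ν a)).const_mul M).congr_deriv ?_
    ring
  have key := image_norm_le_of_norm_deriv_right_le_deriv_boundary' (a := a) (b := b)
    (f := fun x => F x - F a) (f' := F') (B := fun x => M * (HH ν a - HH ν x))
    (B' := fun x => M * (9 / 4 * x / pp ν x ^ 6 + 5 / 4 * ν ^ 2 * x / pp ν x ^ 10))
    (fun x hx => ((hFd x hx.1).sub_const _).continuousAt.continuousWithinAt)
    (fun x hx => ((hFd x hx.1).sub_const _).hasDerivWithinAt)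
    (by simp)
    (fun x hx => (hB x hx.1).continuousAt.continuousWithinAt)
    (fun x hx => (hB x hx.1).hasDerivWithinAt) ?_ (right_mem_Icc.2 hab)
  · have e1 : F a = WW ν a := by simp only [hF, WW, sub_self, Real.cos_zero, Real.sin_zero]; ring
    have e2 : F b = WW ν b := by
      have : ph ν b - ph ν a = n * (2 * π) := by rw [hn]; ring
      simp only [hF, this, WW]
      have hs : Real.sin (n * (2 * π)) = 0 := by
        have := Real.sin_nat_mul_pi (2 * n)
        rw [← this]; congr 1; push_cast; ring
      rw [Real.cos_nat_mul_two_pi, hs]; ring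
    simp only [e1, e2] at key
    refine key.trans ?_
    have := HH_nonneg hν (ha.trans_le hab)
    gcongr
    linarith
  · intro x hx
    have hxn : ν < x := ha.trans_le hx.1
    have hx0 : 0 < x := hν.trans hxn
    have hp := pp_pos hν hxn
    have hp4 := pp_four hν hxn
    simp only [hF']
    rw [Real.norm_eq_abs, abs_mul, abs_mul, abs_neg]
    have e : 9 / 4 * x / pp ν x ^ 6 + 5 / 4 * ν ^ 2 * x / pp ν x ^ 10 =
        x / pp ν x ^ 6 + 5 / 4 * x ^ 3 / pp ν x ^ 10 := by
      have : x ^ 2 = pp ν x ^ 4 + ν ^ 2 := by linarith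
      rw [show x ^ 3 = x * x ^ 2 by ring, this]
      field_simp; ring
    have h1 : |x / pp ν x ^ 6 - 5 / 4 * x ^ 3 / pp ν x ^ 10| ≤
        9 / 4 * x / pp ν x ^ 6 + 5 / 4 * ν ^ 2 * x / pp ν x ^ 10 := by
      rw [e]
      have b1 : 0 < x / pp ν x ^ 6 := by positivity
      have b2 : 0 < 5 / 4 * x ^ 3 / pp ν x ^ 10 := by positivity
      rw [abs_le]; constructor <;> linarith
    calc _ ≤ 1 * M * (9 / 4 * x / pp ν x ^ 6 + 5 / 4 * ν ^ 2 * x / pp ν x ^ 10) := by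
          gcongr
          · exact Real.abs_sin_le_one _
          · exact hM x hx.1
      _ = _ := by ring

/-- Asymptotics at infinity for fixed order. -/
lemma WW_tendsto {ν : ℝ} (hν : 0 < ν) : Filter.Tendsto
    (fun x => WW ν x - Real.cos (ph ν x - π / 4)) Filter.atTop (nhds 0) := by
  obtain ⟨C, hC⟩ := bj_asymp ν hν.le
  have hE : Filter.Tendsto (fun x => √(π / 2) * √x * besselJ ν x - Real.cos (x - ν * π / 2 - π / 4))
      Filter.atTop (nhds 0) := by
    refine squeeze_zero_norm' (a := fun x => C / √x) ?_ ?_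
    · filter_upwards [Filter.eventually_ge_atTop 1] with x hx using hC x hx
    · exact Filter.Tendsto.const_div_atTop Real.tendsto_sqrt_atTop C
  have hdiv : Filter.Tendsto (fun x : ℝ => ν / x) Filter.atTop (nhds 0) :=
    Filter.Tendsto.const_div_atTop Filter.tendsto_id ν
  -- ratio of the amplitudes
  have hr : Filter.Tendsto (fun x => pp ν x / √x) Filter.atTop (nhds 1) := by
    have h1 : Filter.Tendsto (fun x : ℝ => (1 - (ν / x) ^ 2) ^ ((1:ℝ)/4)) Filter.atTop (nhds 1) := by
      have h2 : Filter.Tendsto (fun x : ℝ => (1 - (ν / x) ^ 2)) Filter.atTop (nhds 1) := by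
        simpa using (hdiv.pow 2).const_sub 1
      simpa using h2.rpow_const (p := (1:ℝ)/4) (Or.inl one_ne_zero)
    refine h1.congr' ?_
    filter_upwards [Filter.eventually_gt_atTop ν] with x hx
    have hx0 : 0 < x := hν.trans hx
    have hq := q_pos hν hx
    rw [pp, show 1 - (ν / x) ^ 2 = (x ^ 2 - ν ^ 2) / x ^ 2 by field_simp, Real.div_rpow hq.le (by positivity)]
    congr 1
    rw [Real.sqrt_eq_rpow, ← Real.rpow_natCast, ← Real.rpow_mul hx0.le]
    norm_num
  -- phase difference
  have hph : Filter.Tendsto (fun x => ph ν x - (x - ν * π / 2)) Filter.atTop (nhds 0) := by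
    have h1 : Filter.Tendsto (fun x : ℝ => √(x ^ 2 - ν ^ 2) - x) Filter.atTop (nhds 0) := by
      refine squeeze_zero_norm' (a := fun x : ℝ => ν ^ 2 / x) ?_ ?_
      · filter_upwards [Filter.eventually_gt_atTop ν] with x hx
        have hx0 : 0 < x := hν.trans hx
        have hq := q_pos hν hx
        have s0 := Real.sqrt_nonneg (x ^ 2 - ν ^ 2)
        have s1 := Real.mul_self_sqrt hq.le
        have s2 : √(x ^ 2 - ν ^ 2) ≤ x := by
          rw [Real.sqrt_le_left hx0.le]; nlinarith
        rw [Real.norm_eq_abs, abs_of_nonpos (by linarith), le_div_iff₀ hx0]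
        nlinarith
      · exact Filter.Tendsto.const_div_atTop Filter.tendsto_id _
    have h2 : Filter.Tendsto (fun x : ℝ => ν * (π / 2 - Real.arccos (ν / x))) Filter.atTop (nhds 0) := by
      have := ((Real.continuous_arccos.tendsto 0).comp hdiv).const_sub (π / 2) |>.const_mul ν
      simpa using this
    have := h1.add h2
    rw [add_zero] at this
    refine this.congr fun x => ?_
    rw [ph]; ring
  have hcos : Filter.Tendsto (fun x => Real.cos (x - ν * π / 2 - π / 4) - Real.cos (ph ν x - π / 4))
      Filter.atTop (nhds 0) := by
    refine squeeze_zero_norm (a := fun x => |ph ν x - (x - ν * π / 2)|) (fun x => ?_) (by simpa using hph.abs)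
    have := Real.abs_cos_sub_cos_le (x - ν * π / 2 - π / 4) (ph ν x - π / 4)
    rw [Real.norm_eq_abs]
    refine this.trans (le_of_eq ?_)
    rw [← abs_neg]; congr 1; ring
  -- bounded part
  have hb : Filter.Tendsto (fun x => (pp ν x / √x - 1) * Real.cos (x - ν * π / 2 - π / 4))
      Filter.atTop (nhds 0) := by
    refine squeeze_zero_norm (a := fun x => |pp ν x / √x - 1|) (fun x => ?_) (by simpa using (hr.sub_const 1).abs)
    rw [Real.norm_eq_abs, abs_mul]
    exact mul_le_of_le_one_right (abs_nonneg _) (Real.abs_cos_le_one _)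
  have hfin := ((hr.mul hE).add hb).add hcos
  simp only [mul_zero, add_zero] at hfin
  refine hfin.congr' ?_
  filter_upwards [Filter.eventually_gt_atTop 0] with x hx
  have : 0 < √x := Real.sqrt_pos.2 hx
  rw [WW]
  field_simp
  ring

lemma ph_tendsto {ν : ℝ} (hν : 0 < ν) : Filter.Tendsto (ph ν) Filter.atTop Filter.atTop := by
  refine Filter.tendsto_atTop_mono' _ (f₁ := fun x => x - (ν + ν * π)) ?_
    (Filter.tendsto_atTop_add_const_right _ _ Filter.tendsto_id)
  filter_upwards [Filter.eventually_gt_atTop ν] with x hx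
  rw [ph]
  have h1 := Real.arccos_le_pi (ν / x)
  have h2 : x - ν ≤ √(x ^ 2 - ν ^ 2) := Real.le_sqrt_of_sq_le (by nlinarith)
  nlinarith

/-- The a priori estimate. -/
lemma WW_est {ν a M : ℝ} (hν : 0 < ν) (ha : ν < a) (hM0 : 0 ≤ M)
    (hM : ∀ x, a ≤ x → |WW ν x| ≤ M) :
    |WW ν a - Real.cos (ph ν a - π / 4)| ≤ M * HH ν a := by
  have hcont : ContinuousOn (ph ν) (Ici a) := fun x hx =>
    (ph_deriv hν (ha.trans_le hx)).continuousAt.continuousWithinAt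
  have hex : ∀ n : ℕ, ∃ b, a ≤ b ∧ ph ν b = ph ν a + n * (2 * π) := by
    intro n
    have hle : ph ν a ≤ ph ν a + n * (2 * π) := by
      have : 0 ≤ (n:ℝ) * (2 * π) := by positivity
      linarith
    obtain ⟨T, hT1, hT2⟩ := ((ph_tendsto hν).eventually_ge_atTop (ph ν a + n * (2 * π))).and
      (Filter.eventually_ge_atTop a) |>.exists
    obtain ⟨b, hb, hb'⟩ := intermediate_value_Icc hT2 (hcont.mono Icc_subset_Ici_self) ⟨hle, hT1⟩
    exact ⟨b, hb.1, hb'⟩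
  choose b hab hb using hex
  have hbt : Filter.Tendsto b Filter.atTop Filter.atTop := by
    have h1 : Filter.Tendsto (fun n : ℕ => ph ν a + n * (2 * π)) Filter.atTop Filter.atTop :=
      Filter.tendsto_atTop_add_const_left _ _
        (tendsto_natCast_atTop_atTop.atTop_mul_const (by positivity))
    refine Filter.tendsto_atTop_mono (fun n => ?_) h1
    rw [← hb n]
    have hx := ha.trans_le (hab n)
    have hx0 := hν.trans hx
    refine (ph_le hν hx).trans ?_
    rw [← pp_two hν hx, Real.sqrt_le_left hx0.le]
    nlinarith
  have h2 := (WW_tendsto hν).comp hbt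
  have h3 : Filter.Tendsto (fun n => WW ν (b n)) Filter.atTop (nhds (Real.cos (ph ν a - π / 4))) := by
    have := h2.add_const (Real.cos (ph ν a - π / 4))
    rw [zero_add] at this
    refine this.congr fun n => ?_
    simp only [Function.comp]
    rw [hb n, show ph ν a + n * (2 * π) - π / 4 = (ph ν a - π / 4) + n * (2 * π) by ring,
      Real.cos_add_nat_mul_two_pi]
    ring
  rw [abs_sub_comm]
  refine le_of_tendsto (h3.sub_const (WW ν a)).abs ?_
  exact Filter.Eventually.of_forall fun n => WW_compare hν ha (hab n) hM0 hM n (hb n)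

lemma WW_bdd {ν a : ℝ} (hν : 0 < ν) (ha : ν < a) : ∃ M, ∀ x, a ≤ x → |WW ν x| ≤ M := by
  obtain ⟨y1, y2, hy⟩ := bj_ode ν hν.le
  have hcont : ContinuousOn (WW ν) (Ici a) := fun x hx => by
    have hx' : ν < x := ha.trans_le hx
    exact ((continuousAt_const.mul (pp_deriv hν hx').continuousAt).mul
      (hy x (hν.trans hx')).1.continuousAt).continuousWithinAt
  have h1 : ∀ᶠ x in Filter.atTop, |WW ν x - Real.cos (ph ν x - π / 4)| < 1 := by
    have := (WW_tendsto hν).abs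
    rw [abs_zero] at this
    exact this.eventually_lt_const one_pos
  obtain ⟨T, hT⟩ := Filter.eventually_atTop.1 h1
  obtain ⟨M, hM⟩ := isCompact_Icc.exists_bound_of_continuousOn (hcont.mono (Icc_subset_Ici_self : Icc a T ⊆ Ici a))
  refine ⟨max M 2, fun x hx => ?_⟩
  rcases le_total x T with h | h
  · exact (hM x ⟨hx, h⟩).trans (le_max_left _ _)
  · refine le_trans ?_ (le_max_right _ _)
    have h2 := hT x h
    have h3 := Real.abs_cos_le_one (ph ν x - π / 4)
    have := abs_sub_abs_le_abs_sub (WW ν x) (Real.cos (ph ν x - π / 4))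
    linarith

lemma WW_five {ν a : ℝ} (hν : 0 < ν) (ha : ν < a) (hph : 3 ≤ ph ν a) :
    ∀ x, a ≤ x → |WW ν x| ≤ 5 := by
  obtain ⟨M0, hM0⟩ := WW_bdd hν ha
  set S : Set ℝ := (fun x => |WW ν x|) '' Ici a with hS
  have hSb : BddAbove S := ⟨M0, by rintro _ ⟨x, hx, rfl⟩; exact hM0 x hx⟩
  have hSn : S.Nonempty := ⟨_, a, self_mem_Ici, rfl⟩
  have hle : ∀ x, a ≤ x → |WW ν x| ≤ sSup S := fun x hx => le_csSup hSb ⟨x, hx, rfl⟩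
  have h0 : 0 ≤ sSup S := (abs_nonneg _).trans (hle a le_rfl)
  have hmono : MonotoneOn (ph ν) (Ici a) := by
    refine monotoneOn_of_deriv_nonneg (convex_Ici a) (fun x hx =>
      (ph_deriv hν (ha.trans_le hx)).continuousAt.continuousWithinAt) ?_ ?_
    · intro x hx
      rw [interior_Ici] at hx
      exact (ph_deriv hν (ha.trans hx)).differentiableAt.differentiableWithinAt
    · intro x hx
      rw [interior_Ici] at hx
      have hx' : ν < x := ha.trans hx
      rw [(ph_deriv hν hx').deriv]
      have := hν.trans hx'
      positivity
  have h1 : sSup S ≤ 1 + sSup S * (4/5) := by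
    refine csSup_le hSn ?_
    rintro _ ⟨x, hx, rfl⟩
    have hx' : a ≤ x := hx
    have hxn := ha.trans_le hx'
    have e := WW_est hν hxn h0 (fun z hz => hle z (hx'.trans hz))
    have h3 : 3 ≤ ph ν x := hph.trans (hmono self_mem_Ici hx hx')
    have h4 := HH_le hν hxn (by linarith)
    have h5 : 12 / 5 / ph ν x ≤ 4/5 := by
      rw [div_le_iff₀ (by linarith)]; linarith
    have h6 := Real.abs_cos_le_one (ph ν x - π / 4)
    have h7 := abs_sub_abs_le_abs_sub (WW ν x) (Real.cos (ph ν x - π / 4))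
    have h8 : sSup S * HH ν x ≤ sSup S * (4/5) := by gcongr; linarith
    simp only
    linarith
  intro x hx
  have := hle x hx
  linarith

/-- asymptotics of `J_ν(x)` in the transition regime `ν < x ≤ (1+c)ν` with
`x g(ν/x) ≥ 1`. -/
theorem besselJ_asymptotics_near (c : ℝ) (hc : 0 < c) :
    ∃ N C : ℝ, 0 < N ∧ 0 < C ∧ ∀ ν x : ℝ, N ≤ ν → ν < x → x ≤ (1 + c) * ν →
      1 ≤ x * gfun (ν / x) →
      |Real.sqrt (π / 2) * (x ^ 2 - ν ^ 2) ^ ((1 : ℝ) / 4) * besselJ ν x -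
          Real.sin (π * (x * gfun (ν / x)) + π / 4)| ≤ C / (x * gfun (ν / x)) := by
  refine ⟨1, 4, one_pos, by norm_num, fun ν x hN hx _ hg => ?_⟩
  have hν : 0 < ν := by linarith
  have hx0 : 0 < x := hν.trans hx
  have hq := q_pos hν hx
  have hpi := Real.pi_gt_three
  have e : π * (x * gfun (ν / x)) = ph ν x := by
    have e : √(1 - (ν / x) ^ 2) = pp ν x ^ 2 / x := sqrt_ratio hν hx
    rw [gfun, ph, pp_two hν hx, e]
    field_simp
  set G := x * gfun (ν / x) with hG
  have h3 : 3 ≤ ph ν x := by rw [← e]; nlinarith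
  have h5 := WW_five hν hx h3
  have h6 := WW_est hν hx (by norm_num) h5
  have h7 := HH_le hν hx (by linarith)
  have h8 : Real.sin (ph ν x + π / 4) = Real.cos (ph ν x - π / 4) := by
    rw [← Real.cos_pi_div_two_sub, ← Real.cos_neg]; congr 1; ring
  rw [e, h8]
  refine h6.trans ?_
  calc 5 * HH ν x ≤ 5 * (12 / 5 / ph ν x) := by gcongr
    _ = 12 / ph ν x := by ring
    _ ≤ 12 / (3 * G) := by
      rw [← e]; gcongr
    _ = 4 / G := by rw [← div_div]; norm_num
end
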